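/- arXiv:math/0012195 — 2 statements merged into one kernel-verified Lean document; each statement's English description precedes it below -/
import Mathlib

section
/- For every λ, μ ∈ ℂ, the operators on W^{∞/2+*}(F_{λ,μ}) given by θ(L_n) = Σ_{m∈ℤ}(−m + μ − nλ + λ)(:τ(u_{m+n})ε(u_m'): + :β(u_{m+n})γ(u_m'):), θ(H_n) = λΣ_{m∈ℤ}:τ(u_m)ε(u_{m+n}'): + (λ−1)Σ_{m∈ℤ}:β(u_m)γ(u_{m+n}'): + μδ_{n,0}, θ(G^+_{n−1/2}) = √2·Σ_{m∈ℤ}γ(u_{m+n}')τ(u_m), θ(G^−_{n+1/2}) = √2·Σ_{m∈ℤ}(m − μ − (n+1)λ)β(u_{m−n})ε(u_m'), and θ(ℒ_n) = −θ(L_{−n}) + ((n+1)/2)θ(H_n), define a representation of the N = 2 superconformal algebra on W^{∞/2+*}(F_{λ,μ}) with central charge 3 − 6λ, i.e. the central element 𝒸 acts as (3 − 6λ)·id. -/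
noncomputable section

open Function

/-- Kronecker delta `δ_{n,0}` with values in `ℂ`. -/
def deltaZ (n : ℤ) : ℂ := if n = 0 then 1 else 0

/-- The semi-infinite Weil module `W^{∞/2+*}(Ṽ)` attached to a loop space with homogeneous
basis `u_m` (`u : ι`, `m : ℤ`, `u_m = u ⊗ tᵐ`): a complex vector space `W` equipped with
operators `β(u_m)`, `γ(u_m')` (the symmetric part) and `τ(u_m)`, `ε(u_m')` (the exterior
part) obeying the canonical (anti)commutation relations, with a vacuum vector annihilated
by `β(x), τ(x)` for `x` of positive degree and by `γ(x'), ε(x')` for `x'` dual to vectors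
of nonpositive degree, and cyclically generated by the operators from the vacuum. -/
structure WeilModule (ι : Type*) [DecidableEq ι] (W : Type*) [AddCommGroup W] [Module ℂ W] where
  vac : W
  β : ι → ℤ → Module.End ℂ W
  γ : ι → ℤ → Module.End ℂ W
  τ : ι → ℤ → Module.End ℂ W
  ε : ι → ℤ → Module.End ℂ W
  rel_γβ : ∀ u m v k, γ u m * β v k - β v k * γ u m = if u = v ∧ m = k then 1 else 0
  rel_ββ : ∀ u m v k, β u m * β v k = β v k * β u m
  rel_γγ : ∀ u m v k, γ u m * γ v k = γ v k * γ u m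
  rel_ετ : ∀ u m v k, ε u m * τ v k + τ v k * ε u m = if u = v ∧ m = k then 1 else 0
  rel_ττ : ∀ u m v k, τ u m * τ v k + τ v k * τ u m = 0
  rel_εε : ∀ u m v k, ε u m * ε v k + ε v k * ε u m = 0
  rel_βτ : ∀ u m v k, β u m * τ v k = τ v k * β u m
  rel_βε : ∀ u m v k, β u m * ε v k = ε v k * β u m
  rel_γτ : ∀ u m v k, γ u m * τ v k = τ v k * γ u m
  rel_γε : ∀ u m v k, γ u m * ε v k = ε v k * γ u m
  vac_β : ∀ u m, 0 < m → β u m vac = 0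
  vac_γ : ∀ u m, m ≤ 0 → γ u m vac = 0
  vac_τ : ∀ u m, 0 < m → τ u m vac = 0
  vac_ε : ∀ u m, m ≤ 0 → ε u m vac = 0
  cyclic : ∀ p : Submodule ℂ W, vac ∈ p →
    (∀ u m, ∀ w ∈ p, β u m w ∈ p ∧ γ u m w ∈ p ∧ τ u m w ∈ p ∧ ε u m w ∈ p) → p = ⊤

namespace WeilModule

variable {ι W : Type*} [DecidableEq ι] [AddCommGroup W] [Module ℂ W]

/-- Normal ordering `:τ(u_a) ε(v_b'):`  (`ε(v_b')` is an annihilation operator iff `b ≤ 0`). -/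
def noτε (M : WeilModule ι W) (u : ι) (a : ℤ) (v : ι) (b : ℤ) : Module.End ℂ W :=
  if b ≤ 0 then M.τ u a * M.ε v b else -(M.ε v b * M.τ u a)

/-- Normal ordering `:β(u_a) γ(v_b'):`. -/
def noβγ (M : WeilModule ι W) (u : ι) (a : ℤ) (v : ι) (b : ℤ) : Module.End ℂ W :=
  if b ≤ 0 then M.β u a * M.γ v b else M.γ v b * M.β u a

/-- Normal ordering `:γ(v_b') β(u_a):`. -/
def noγβ (M : WeilModule ι W) (v : ι) (b : ℤ) (u : ι) (a : ℤ) : Module.End ℂ W :=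
  if 0 < b then M.γ v b * M.β u a else M.β u a * M.γ v b

end WeilModule

/-- The commutation relations of the `N = 2` superconformal algebra with central charge `C`,
holding pointwise on the submodule `P`: `Lc n` represents `ℒ_n`, `Hc n` represents `H_n`,
`Gp n` represents `G⁺_{n-1/2}` and `Gm n` represents `G⁻_{n+1/2}`, and the central element
`𝒸` acts as `C • id`. -/
def IsN2RepOn {W : Type*} [AddCommGroup W] [Module ℂ W] (P : Submodule ℂ W) (C : ℂ)
    (Lc Hc Gp Gm : ℤ → Module.End ℂ W) : Prop :=
  (∀ n m, ∀ w ∈ P, (Lc n * Lc m - Lc m * Lc n) w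
      = ((n : ℂ) - (m : ℂ)) • Lc (n + m) w + (C / 12 * ((n : ℂ) ^ 3 - (n : ℂ)) * deltaZ (n + m)) • w) ∧
  (∀ n m, ∀ w ∈ P, (Lc n * Hc m - Hc m * Lc n) w = (-(m : ℂ)) • Hc (n + m) w) ∧
  (∀ n k, ∀ w ∈ P, (Lc n * Gp k - Gp k * Lc n) w = ((n : ℂ) / 2 - (k : ℂ) + 1 / 2) • Gp (n + k) w) ∧
  (∀ n k, ∀ w ∈ P, (Lc n * Gm k - Gm k * Lc n) w = ((n : ℂ) / 2 - (k : ℂ) - 1 / 2) • Gm (n + k) w) ∧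
  (∀ k l, ∀ w ∈ P, (Gp k * Gm l + Gm l * Gp k) w
      = (2 : ℂ) • Lc (k + l) w + ((k : ℂ) - (l : ℂ) - 1) • Hc (k + l) w
        + (C / 3 * ((k : ℂ) ^ 2 - (k : ℂ)) * deltaZ (k + l)) • w) ∧
  (∀ k l, ∀ w ∈ P, (Gp k * Gp l + Gp l * Gp k) w = 0) ∧
  (∀ k l, ∀ w ∈ P, (Gm k * Gm l + Gm l * Gm k) w = 0) ∧
  (∀ n m, ∀ w ∈ P, (Hc n * Hc m - Hc m * Hc n) w = (C / 3 * (n : ℂ) * deltaZ (n + m)) • w) ∧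
  (∀ n k, ∀ w ∈ P, (Hc n * Gp k - Gp k * Hc n) w = Gp (n + k) w) ∧
  (∀ n k, ∀ w ∈ P, (Hc n * Gm k - Gm k * Hc n) w = -(Gm (n + k) w))

/-!
Normally ordered bilinears in canonical super oscillators form a projective representation of the
Lie superalgebra of band matrices with entries in `gl(1|1)`: a product of two bilinears contracts
once into the bilinear of the matrix product and twice into a scalar. Normal ordering depends on the
sign of the mode, so the only failure of the representation is a cocycle, the signed sum over the
modes between `0` and the degree of the supertrace of the product of the coefficient matrices.

The `N = 2` generators are such bilinears plus scalars. Up to the scalars, the relations become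
identities between `2 × 2` matrices of affine functions of the mode. The terms quadratic in the mode
cancel in the supertrace, hence each cocycle is the signed sum of an affine function, and these sums
give the central charge `3 - 6λ`.
-/

open Filter

section TwistedCommutator
variable {R A : Type*} [CommRing R] [Ring A] [Algebra R A]

/-- The bracket `X * Y - c • (Y * X)`: the commutator for `c = 1`, the anticommutator for `c = -1`,
and the super bracket of homogeneous elements when `c` is their Koszul sign. -/
def twistedCommutator (c : R) : A →ₗ[R] A →ₗ[R] A :=
  LinearMap.mul R A - c • (LinearMap.mul R A).flip

theorem twistedCommutator_apply (c : R) (X Y : A) :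
    twistedCommutator c X Y = X * Y - c • (Y * X) := rfl

theorem twistedCommutator_eq_neg_smul_swap {c d : R} (hcd : c * d = 1) (X Y : A) :
    twistedCommutator c X Y = -c • twistedCommutator d Y X := by
  simp only [twistedCommutator_apply, smul_sub, smul_smul, neg_mul, hcd, neg_smul, one_smul,
    sub_neg_eq_add, neg_add_eq_sub]

theorem twistedCommutator_mul_right (c d : R) (X Y Z : A) :
    twistedCommutator (c * d) X (Y * Z) =
      twistedCommutator c X Y * Z + c • (Y * twistedCommutator d X Z) := by
  simp only [twistedCommutator_apply, sub_mul, mul_sub, smul_mul_assoc, mul_smul_comm, smul_sub,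
    mul_smul, mul_assoc, sub_add_sub_cancel]

theorem twistedCommutator_mul_left (c d : R) (X Y Z : A) :
    twistedCommutator (c * d) (X * Y) Z =
      X * twistedCommutator d Y Z + d • (twistedCommutator c X Z * Y) := by
  simp only [twistedCommutator_apply, sub_mul, mul_sub, smul_mul_assoc, mul_smul_comm, smul_sub,
    mul_comm c d, mul_smul, mul_assoc, sub_add_sub_cancel]

theorem twistedCommutator_one_one_left (X : A) : twistedCommutator (1 : R) 1 X = 0 := by
  simp [twistedCommutator_apply]

theorem twistedCommutator_one_one_right (X : A) : twistedCommutator (1 : R) X 1 = 0 := by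
  simp [twistedCommutator_apply]

end TwistedCommutator

section LocalSum

variable {R W α β : Type*} [CommRing R] [AddCommGroup W] [Module R W]

/-- `A` is the sum of the pointwise finite family of operators `f`. -/
def IsLocalSum (f : α → Module.End R W) (A : Module.End R W) : Prop :=
  ∀ w, HasFiniteSupport (fun a => f a w) ∧ A w = ∑ᶠ a, f a w

namespace IsLocalSum

variable {f g : α → Module.End R W} {A B : Module.End R W}

theorem eq_of_apply (hA : IsLocalSum f A) (hB : ∀ w, B w = ∑ᶠ a, f a w) : B = A :=
  LinearMap.ext fun w => (hB w).trans (hA w).2.symm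

theorem unique (hA : IsLocalSum f A) (hB : IsLocalSum f B) : A = B :=
  hB.eq_of_apply fun w => (hA w).2

theorem add (hA : IsLocalSum f A) (hB : IsLocalSum g B) :
    IsLocalSum (fun a => f a + g a) (A + B) := fun w =>
  ⟨(hA w).1.add (hB w).1, by
    simp only [LinearMap.add_apply, finsum_add_distrib (hA w).1 (hB w).1, (hA w).2, (hB w).2]⟩

theorem mul_left (X : Module.End R W) (hA : IsLocalSum f A) :
    IsLocalSum (fun a => X * f a) (X * A) := fun w =>
  ⟨(hA w).1.fun_comp (map_zero X), by
    simp only [Module.End.mul_apply, (hA w).2, map_finsum X (hA w).1]⟩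

theorem mul_right (X : Module.End R W) (hA : IsLocalSum f A) :
    IsLocalSum (fun a => f a * X) (A * X) := fun w => hA (X w)

theorem smul (c : R) (hA : IsLocalSum f A) : IsLocalSum (fun a => c • f a) (c • A) := by
  simpa only [smul_one_mul] using hA.mul_left (c • 1)

theorem sub (hA : IsLocalSum f A) (hB : IsLocalSum g B) :
    IsLocalSum (fun a => f a - g a) (A - B) := by
  simpa only [sub_eq_add_neg, neg_one_smul] using hA.add (hB.smul (-1))

theorem comp_equiv (hA : IsLocalSum f A) (e : β ≃ α) : IsLocalSum (fun b => f (e b)) A := fun w =>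
  ⟨(hA w).1.fun_comp_of_injective e.injective,
    (hA w).2.trans (finsum_comp_equiv e (f := fun a => f a w)).symm⟩

theorem twistedCommutator_left (c : R) (X : Module.End R W) (hA : IsLocalSum f A) :
    IsLocalSum (fun a => twistedCommutator c (f a) X) (twistedCommutator c A X) :=
  (hA.mul_right X).sub ((hA.mul_left X).smul c)

theorem twistedCommutator_right (c : R) (X : Module.End R W) (hA : IsLocalSum f A) :
    IsLocalSum (fun a => twistedCommutator c X (f a)) (twistedCommutator c X A) :=
  (hA.mul_left X).sub ((hA.mul_right X).smul c)

end IsLocalSum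

theorem isLocalSum_ite_mem [DecidableEq α] (s : Finset α) (f : α → Module.End R W) :
    IsLocalSum (fun a => if a ∈ s then f a else 0) (∑ a ∈ s, f a) := by
  intro w
  have hsupp : support (fun a => (if a ∈ s then f a else 0) w) ⊆ s := fun a ha => by
    by_contra has
    exact ha (by simp_all)
  refine ⟨s.finite_toSet.subset hsupp, ?_⟩
  rw [finsum_eq_sum_of_support_subset _ hsupp, LinearMap.sum_apply]
  exact Finset.sum_congr rfl fun a ha => by rw [if_pos ha]

theorem isLocalSum_ite_eq [DecidableEq α] (a₀ : α) (X : Module.End R W) :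
    IsLocalSum (fun a => if a = a₀ then X else 0) X := by
  simpa using isLocalSum_ite_mem {a₀} fun _ => X

/-- The operator `∑ₐ c a • f a` of a pointwise finite family `f`, as a linear function of the
coefficients `c`. -/
def localSum (f : α → Module.End R W) (hf : ∀ w, HasFiniteSupport fun a => f a w) :
    (α → R) →ₗ[R] Module.End R W :=
  LinearMap.mk₂ R (fun c w => ∑ᶠ a, c a • f a w)
    (fun c d w => by
      simp only [Pi.add_apply, add_smul]
      exact finsum_add_distrib ((hf w).smul_right c) ((hf w).smul_right d))
    (fun r c w => by
      simp only [Pi.smul_apply, smul_assoc]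
      exact (smul_finsum' r ((hf w).smul_right c)).symm)
    (fun c v w => by
      simp only [map_add, smul_add]
      exact finsum_add_distrib ((hf v).smul_right c) ((hf w).smul_right c))
    (fun r c w => by
      refine Eq.trans ?_ (smul_finsum' r ((hf w).smul_right c)).symm
      exact finsum_congr fun a => by rw [map_smul, smul_comm]; rfl)

theorem isLocalSum_localSum (f : α → Module.End R W) (hf : ∀ w, HasFiniteSupport fun a => f a w)
    (c : α → R) : IsLocalSum (fun a => c a • f a) (localSum f hf c) := fun w =>
  ⟨(hf w).smul_right c, rfl⟩

end LocalSum

section SignedSum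

/-- The sum of `f` over `0 < m ≤ n`, counted with a minus sign over `n < m ≤ 0` when `n < 0`. -/
def signedSum {A : Type*} [AddCommGroup A] (n : ℤ) (f : ℤ → A) : A :=
  ∑ m ∈ Finset.Ioc 0 n, f m - ∑ m ∈ Finset.Ioc n 0, f m

variable {A : Type*} [AddCommGroup A]

theorem signedSum_zero (f : ℤ → A) : signedSum 0 f = 0 := by simp [signedSum]

theorem signedSum_sum {κ : Type*} (s : Finset κ) (n : ℤ) (f : κ → ℤ → A) :
    signedSum n (fun m => ∑ i ∈ s, f i m) = ∑ i ∈ s, signedSum n (f i) := by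
  simp only [signedSum, Finset.sum_sub_distrib]
  rw [Finset.sum_comm, Finset.sum_comm (s := Finset.Ioc n 0)]

theorem signedSum_mul_left {R : Type*} [Ring R] (n : ℤ) (c : R) (f : ℤ → R) :
    signedSum n (fun m => c * f m) = c * signedSum n f := by
  simp only [signedSum, mul_sub, Finset.mul_sum]

theorem signedSum_add_one (n : ℤ) (f : ℤ → A) :
    signedSum (n + 1) f = signedSum n f + f (n + 1) := by
  obtain hn | hn := le_or_gt 0 n
  · have hIoc : Finset.Ioc 0 (n + 1) = insert (n + 1) (Finset.Ioc 0 n) := by ext; simp; omega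
    rw [signedSum, signedSum, hIoc, Finset.sum_insert (by simp),
      Finset.Ioc_eq_empty_of_le (hn.trans (Int.le_add_one le_rfl)), Finset.Ioc_eq_empty_of_le hn]
    simp only [Finset.sum_empty, sub_zero, add_comm]
  · have hIoc : Finset.Ioc n 0 = insert (n + 1) (Finset.Ioc (n + 1) 0) := by ext; simp; omega
    rw [signedSum, signedSum, hIoc, Finset.sum_insert (by simp),
      Finset.Ioc_eq_empty_of_le (Int.add_one_le_of_lt hn), Finset.Ioc_eq_empty_of_le hn.le]
    simp only [Finset.sum_empty, zero_sub]
    abel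

theorem signedSum_affine {F : Type*} [Field F] [CharZero F] (n : ℤ) {f : ℤ → F} (c d : F)
    (hf : ∀ m, f m = c * m + d) : signedSum n f = c * (n * (n + 1) / 2) + d * n := by
  induction n using Int.induction_on with
  | zero => simp [signedSum_zero]
  | succ i ih =>
    rw [signedSum_add_one, ih, hf]
    push_cast
    ring
  | pred i ih =>
    have hstep := signedSum_add_one (-(i : ℤ) - 1) f
    rw [sub_add_cancel, ih, hf] at hstep
    push_cast at hstep ⊢
    linear_combination -hstep

theorem isLocalSum_signedSum {R W : Type*} [CommRing R] [AddCommGroup W] [Module R W]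
    (n : ℤ) (f : ℤ → R) :
    IsLocalSum (fun m => (f m * ((if 0 < m then 1 else 0) - (if 0 < m - n then 1 else 0))) •
      (1 : Module.End R W)) (signedSum n f • 1) := by
  have hsum := (isLocalSum_ite_mem (Finset.Ioc 0 n) fun m => f m • (1 : Module.End R W)).sub
    (isLocalSum_ite_mem (Finset.Ioc n 0) fun m => f m • (1 : Module.End R W))
  rw [← Finset.sum_smul, ← Finset.sum_smul, ← sub_smul, ← signedSum] at hsum
  convert hsum using 2 with m
  simp only [Finset.mem_Ioc]
  split_ifs <;> first | omega | simp

end SignedSum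

section KoszulSign

/-- The Koszul sign `(-1) ^ (i * j)` in `R` of two parities. -/
def koszulSign (R : Type*) [Ring R] (i j : ZMod 2) : R := if i = 1 ∧ j = 1 then -1 else 1

variable {R : Type*} [Ring R]

theorem koszulSign_comm (i j : ZMod 2) : koszulSign R i j = koszulSign R j i := by
  simp only [koszulSign, and_comm]

theorem koszulSign_mul_swap (i j : ZMod 2) : koszulSign R i j * koszulSign R j i = 1 := by
  simp only [koszulSign, and_comm (a := j = 1)]
  split_ifs <;> simp

theorem koszulSign_zero_left (j : ZMod 2) : koszulSign R 0 j = 1 := by simp [koszulSign]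

theorem koszulSign_zero_right (i : ZMod 2) : koszulSign R i 0 = 1 := by simp [koszulSign]

theorem koszulSign_one_one : koszulSign R 1 1 = -1 := by simp [koszulSign]

theorem koszulSign_add_left (i j k : ZMod 2) :
    koszulSign R (i + j) k = koszulSign R i k * koszulSign R j k := by
  fin_cases i <;> fin_cases j <;> fin_cases k <;> simp [koszulSign, ZMod]

theorem koszulSign_add_right (i j k : ZMod 2) :
    koszulSign R i (j + k) = koszulSign R i j * koszulSign R i k := by
  simp only [koszulSign_comm i, koszulSign_add_left]

theorem koszulSign_add_self_mul (i j : ZMod 2) :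
    koszulSign R (i + j) (j + i) * koszulSign R j j = koszulSign R i i := by
  fin_cases i <;> fin_cases j <;> simp [koszulSign, ZMod]

end KoszulSign

section SuperMatrix

variable {R K : Type*} [CommRing R]

/-- A family of matrices is homogeneous of degree `i` for the grading of the rows and columns by
the parities `p`. -/
def IsSuperHomogeneous (p : K → ZMod 2) (A : ℤ → Matrix K K R) (i : ZMod 2) : Prop :=
  ∀ s t, p s + p t ≠ i → ∀ m, A m s t = 0

theorem isSuperHomogeneous_diagonal (a d : ℤ → R) :
    IsSuperHomogeneous ![0, 1] (fun m => !![a m, 0; 0, d m]) 0 := by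
  intro s t hst m
  fin_cases s <;> fin_cases t <;> simp_all [CharTwo.add_self_eq_zero]

theorem isSuperHomogeneous_antidiagonal (b c : ℤ → R) :
    IsSuperHomogeneous ![0, 1] (fun m => !![0, b m; c m, 0]) 1 := by
  intro s t hst m
  fin_cases s <;> fin_cases t <;> simp_all

/-- The supertrace of a matrix whose rows and columns have parities `p`. -/
def supertrace [Fintype K] (p : K → ZMod 2) (X : Matrix K K R) : R :=
  ∑ s, koszulSign R (p s) (p s) * X s s

theorem supertrace_fin_two (a b c d : R) : supertrace ![0, 1] !![a, b; c, d] = a - d := by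
  simp [supertrace, koszulSign_zero_left, koszulSign_one_one, sub_eq_add_neg]

theorem IsSuperHomogeneous.supertrace_mul_eq_zero [Fintype K] {p : K → ZMod 2}
    {A B : ℤ → Matrix K K R} (hA : IsSuperHomogeneous p A 0) (hB : IsSuperHomogeneous p B 1)
    (k l : ℤ) : supertrace p (A k * B l) = 0 := by
  refine Finset.sum_eq_zero fun s _ => ?_
  rw [Matrix.mul_apply, Finset.sum_eq_zero, mul_zero]
  intro t _
  by_cases hst : p s + p t = 0
  · rw [hB t s (by rw [add_comm, hst]; exact zero_ne_one), mul_zero]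
  · rw [hA s t hst, zero_mul]

end SuperMatrix

/-- Mutually dual families of operators `x s m`, `d s m` (`s` a colour of parity `p s`, `m` a mode)
obeying canonical super commutation relations on `W`, such that each vector is killed by `x s m`
for large `m` and by `d s m` for very negative `m`. -/
structure SuperOscillator (R : Type*) [CommRing R] {K : Type*} [DecidableEq K] (p : K → ZMod 2)
    (W : Type*) [AddCommGroup W] [Module R W] where
  x : K → ℤ → Module.End R W
  d : K → ℤ → Module.End R W
  bracket_x_x : ∀ s m t k, twistedCommutator (koszulSign R (p s) (p t)) (x s m) (x t k) = 0
  bracket_d_d : ∀ s m t k, twistedCommutator (koszulSign R (p s) (p t)) (d s m) (d t k) = 0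
  bracket_d_x : ∀ s m t k, twistedCommutator (koszulSign R (p s) (p t)) (d s m) (x t k) =
    if s = t ∧ m = k then 1 else 0
  eventually_x : ∀ s w, ∀ᶠ m in atTop, x s m w = 0
  eventually_d : ∀ s w, ∀ᶠ m in atBot, d s m w = 0

namespace SuperOscillator

variable {R K W : Type*} [CommRing R] [DecidableEq K] {p : K → ZMod 2} [AddCommGroup W]
  [Module R W] (O : SuperOscillator R p W)

theorem bracket_x_d (s : K) (m : ℤ) (t : K) (k : ℤ) :
    twistedCommutator (koszulSign R (p s) (p t)) (O.x s m) (O.d t k) =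
      if s = t ∧ m = k then -koszulSign R (p s) (p s) • 1 else 0 := by
  rw [twistedCommutator_eq_neg_smul_swap (koszulSign_mul_swap (p s) (p t)), bracket_d_x]
  by_cases h : s = t ∧ m = k
  · rw [if_pos h, if_pos ⟨h.1.symm, h.2.symm⟩, h.1]
  · rw [if_neg h, if_neg fun h' => h ⟨h'.1.symm, h'.2.symm⟩, smul_zero]

/-- The normally ordered product `:x s a * d t b:`, with `d t b` the annihilation operator exactly
when `b ≤ 0`. -/
def normalOrdered (s : K) (a : ℤ) (t : K) (b : ℤ) : Module.End R W :=
  if b ≤ 0 then O.x s a * O.d t b else koszulSign R (p s) (p t) • (O.d t b * O.x s a)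

theorem x_mul_d (s : K) (a : ℤ) (t : K) (b : ℤ) :
    O.x s a * O.d t b = O.normalOrdered s a t b -
      (if s = t ∧ a = b ∧ 0 < b then koszulSign R (p s) (p s) else 0) • 1 := by
  obtain hb | hb := le_or_gt b 0
  · simp [normalOrdered, hb, hb.not_gt]
  · have hbracket := O.bracket_x_d s a t b
    rw [twistedCommutator_apply, sub_eq_iff_eq_add'] at hbracket
    rw [hbracket, normalOrdered, if_neg hb.not_ge, sub_eq_add_neg]
    simp only [hb, and_true]
    split_ifs <;> simp

theorem twistedCommutator_normalOrdered_left (s : K) (a : ℤ) (t : K) (b : ℤ) (j : ZMod 2)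
    (X : Module.End R W) :
    twistedCommutator (koszulSign R (p s + p t) j) (O.normalOrdered s a t b) X =
      twistedCommutator (koszulSign R (p s + p t) j) (O.x s a * O.d t b) X := by
  rw [x_mul_d]
  split_ifs with h
  · rw [← h.1, CharTwo.add_self_eq_zero, koszulSign_zero_left, map_sub, LinearMap.sub_apply,
      map_smul, LinearMap.smul_apply, twistedCommutator_one_one_left, smul_zero, sub_zero]
  · rw [zero_smul, sub_zero]

theorem twistedCommutator_normalOrdered_right (s : K) (a : ℤ) (t : K) (b : ℤ) (j : ZMod 2)
    (X : Module.End R W) :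
    twistedCommutator (koszulSign R j (p s + p t)) X (O.normalOrdered s a t b) =
      twistedCommutator (koszulSign R j (p s + p t)) X (O.x s a * O.d t b) := by
  rw [x_mul_d]
  split_ifs with h
  · rw [← h.1, CharTwo.add_self_eq_zero, koszulSign_zero_right, map_sub, map_smul,
      twistedCommutator_one_one_right, smul_zero, sub_zero]
  · rw [zero_smul, sub_zero]

theorem hasFiniteSupport_normalOrdered (s t : K) (n : ℤ) (w : W) :
    HasFiniteSupport fun m => O.normalOrdered s (m + n) t m w := by
  refine eventually_cofinite.mp ?_
  rw [Int.cofinite_eq, eventually_sup]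
  constructor
  · filter_upwards [O.eventually_d t w, eventually_le_atBot 0] with m hd hm
    rw [normalOrdered, if_pos hm, Module.End.mul_apply, hd, map_zero]
  · filter_upwards [(tendsto_atTop_add_const_right _ n tendsto_id).eventually (O.eventually_x s w),
      eventually_gt_atTop 0] with m hx hm
    rw [normalOrdered, if_neg hm.not_ge, LinearMap.smul_apply, Module.End.mul_apply]
    exact (congrArg _ ((congrArg _ hx).trans (map_zero _))).trans (smul_zero _)

/-- The operator `∑ₘ a m • :x s (m + n) * d t m:`, as a linear function of `a`. -/
def mode (s t : K) (n : ℤ) : (ℤ → R) →ₗ[R] Module.End R W :=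
  localSum (fun m => O.normalOrdered s (m + n) t m) (O.hasFiniteSupport_normalOrdered s t n)

theorem isLocalSum_mode (s t : K) (n : ℤ) (a : ℤ → R) :
    IsLocalSum (fun m => a m • O.normalOrdered s (m + n) t m) (O.mode s t n a) :=
  isLocalSum_localSum _ _ a

theorem isLocalSum_mode_sub (s t : K) (n l : ℤ) (a : ℤ → R) :
    IsLocalSum (fun m => a (m - l) • O.normalOrdered s (m - l + n) t (m - l)) (O.mode s t n a) :=
  (O.isLocalSum_mode s t n a).comp_equiv (Equiv.subRight l)

theorem isLocalSum_normalOrdered_add (s t : K) (n : ℤ) :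
    IsLocalSum (fun m => O.normalOrdered s m t (m + n)) (O.mode s t (-n) 1) := by
  simpa using O.isLocalSum_mode_sub s t (-n) (-n) 1

theorem bracket_mode_x (s t r : K) (n k : ℤ) (a : ℤ → R) :
    twistedCommutator (koszulSign R (p s + p t) (p r)) (O.mode s t n a) (O.x r k) =
      (if t = r then a k else 0) • O.x s (k + n) := by
  refine ((O.isLocalSum_mode s t n a).twistedCommutator_left _ _).unique ?_
  convert isLocalSum_ite_eq k ((if t = r then a k else 0) • O.x s (k + n)) using 2 with m
  rw [map_smul, LinearMap.smul_apply, twistedCommutator_normalOrdered_left, koszulSign_add_left,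
    twistedCommutator_mul_left, bracket_x_x, bracket_d_x, zero_mul, smul_zero, add_zero]
  split_ifs <;> simp_all

theorem bracket_mode_d (s t r : K) (n k : ℤ) (a : ℤ → R) :
    twistedCommutator (koszulSign R (p s + p t) (p r)) (O.mode s t n a) (O.d r k) =
      (if s = r then -(koszulSign R (p s + p t) (p s) * a (k - n)) else 0) • O.d t (k - n) := by
  refine ((O.isLocalSum_mode s t n a).twistedCommutator_left _ _).unique ?_
  convert isLocalSum_ite_eq (k - n)
    ((if s = r then -(koszulSign R (p s + p t) (p s) * a (k - n)) else 0) • O.d t (k - n))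
    using 2 with m
  rw [map_smul, LinearMap.smul_apply, twistedCommutator_normalOrdered_left, koszulSign_add_left,
    twistedCommutator_mul_left, bracket_d_d, bracket_x_d, mul_zero, zero_add]
  by_cases hm : m = k - n
  · subst hm
    by_cases hs : s = r
    · subst hs
      simp only [sub_add_cancel, and_self, if_true, smul_mul_assoc, one_mul, smul_smul,
        koszulSign_add_left]
      congr 1
      ring
    · simp only [hs, false_and, if_false, zero_mul, smul_zero, if_true, zero_smul]
  · rw [if_neg hm, if_neg fun h => hm (eq_sub_of_add_eq h.2), zero_mul, smul_zero, smul_zero]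

theorem bracket_mode_normalOrdered (s t s' t' : K) (n l m : ℤ) (a : ℤ → R) :
    twistedCommutator (koszulSign R (p s + p t) (p s' + p t')) (O.mode s t n a)
        (O.normalOrdered s' (m + l) t' m) =
      (if t = s' then a (m + l) else 0) • O.normalOrdered s (m + (n + l)) t' m -
      (if s = t' then koszulSign R (p s + p t) (p s' + p t') * a (m - n) else 0) •
        O.normalOrdered s' (m - n + (n + l)) t (m - n) -
      (if t = s' ∧ s = t' ∧ n + l = 0 then koszulSign R (p s) (p s) *
        (a (m - n) * ((if 0 < m then 1 else 0) - (if 0 < m - n then 1 else 0))) else 0) • 1 := by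
  rw [twistedCommutator_normalOrdered_right, koszulSign_add_right, twistedCommutator_mul_right,
    bracket_mode_x, bracket_mode_d, smul_mul_assoc, mul_smul_comm, x_mul_d, x_mul_d,
    add_assoc m l n, add_comm l n, (by ring : m - n + (n + l) = m + l), smul_smul]
  have hcontract : (m + (n + l) = m ↔ n + l = 0) ∧ (m + l = m - n ↔ n + l = 0) := by omega
  simp only [hcontract]
  by_cases ht : t = s' <;> by_cases hs : s = t'
  · subst ht hs
    by_cases hn : n + l = 0
    · have hml : m + l = m - n := by omega
      have hsign := koszulSign_add_self_mul (R := R) (p s) (p t)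
      rw [koszulSign_add_right] at hsign
      simp only [hn, hml, true_and, if_true, ← hsign]
      split_ifs <;> module
    · simp only [hn, false_and, and_false, if_true, if_false]
      module
  · simp [ht, hs]
  · simp [hs, Ne.symm ht, mul_assoc, ht]
  · simp [ht, hs]

theorem bracket_mode_mode (s t s' t' : K) (n l : ℤ) (a b : ℤ → R) :
    twistedCommutator (koszulSign R (p s + p t) (p s' + p t')) (O.mode s t n a) (O.mode s' t' l b) =
      (if t = s' then (1 : R) else 0) • O.mode s t' (n + l) (fun m => a (m + l) * b m) -
      (if s = t' then koszulSign R (p s + p t) (p s' + p t') else 0) •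
        O.mode s' t (n + l) (fun m => b (m + n) * a m) -
      (if t = s' ∧ s = t' ∧ n + l = 0 then koszulSign R (p s) (p s) else 0) •
        (signedSum n fun m => a (m - n) * b m) • 1 := by
  refine ((O.isLocalSum_mode s' t' l b).twistedCommutator_right _ _).unique ?_
  convert (((O.isLocalSum_mode s t' (n + l) _).smul _).sub
    ((O.isLocalSum_mode_sub s' t (n + l) n _).smul _)).sub
    ((isLocalSum_signedSum n fun m => a (m - n) * b m).smul _) using 2 with m
  rw [map_smul, bracket_mode_normalOrdered, sub_add_cancel]
  simp only [smul_sub, smul_smul]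
  split_ifs <;> module

theorem bracket_mode_mode_of_isSuperHomogeneous {A B : ℤ → Matrix K K R} {i j : ZMod 2}
    (hA : IsSuperHomogeneous p A i) (hB : IsSuperHomogeneous p B j) (n l : ℤ) (s t s' t' : K) :
    twistedCommutator (koszulSign R i j) (O.mode s t n fun m => A m s t)
        (O.mode s' t' l fun m => B m s' t') =
      (if t = s' then (1 : R) else 0) • O.mode s t' (n + l) (fun m => A (m + l) s t * B m s' t') -
      (if s = t' then koszulSign R i j else 0) •
        O.mode s' t (n + l) (fun m => B (m + n) s' t' * A m s t) -
      (if t = s' ∧ s = t' ∧ n + l = 0 then koszulSign R (p s) (p s) else 0) •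
        (signedSum n fun m => A (m - n) s t * B m s' t') • 1 := by
  by_cases hi : p s + p t = i
  · by_cases hj : p s' + p t' = j
    · subst hi hj
      exact O.bracket_mode_mode s t s' t' n l _ _
    · simp only [hB s' t' hj]
      simp [signedSum, ← Pi.zero_def]
  · simp only [hA s t hi]
    simp [signedSum, ← Pi.zero_def]

variable [Fintype K]

/-- The operator `∑ₘ ∑ₛₜ A m s t • :x s (m + n) * d t m:`, as a linear function of `A`. -/
def quad (n : ℤ) : (ℤ → Matrix K K R) →ₗ[R] Module.End R W :=
  ∑ s, ∑ t, O.mode s t n ∘ₗ (Matrix.entryLinearMap R R s t).compLeft ℤ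

theorem quad_apply (n : ℤ) (A : ℤ → Matrix K K R) :
    O.quad n A = ∑ s, ∑ t, O.mode s t n fun m => A m s t := by
  simp only [quad, LinearMap.sum_apply]
  rfl

theorem quad_mul (n : ℤ) (A B : ℤ → Matrix K K R) :
    O.quad n (fun m => A m * B m) =
      ∑ s, ∑ t, ∑ r, O.mode s t n fun m => A m s r * B m r t := by
  simp only [quad_apply, ← map_sum]
  congr! with s _ t _ m
  simp [Matrix.mul_apply]

theorem bracket_quad {A B : ℤ → Matrix K K R} {i j : ZMod 2} (hA : IsSuperHomogeneous p A i)
    (hB : IsSuperHomogeneous p B j) (n l : ℤ) :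
    twistedCommutator (koszulSign R i j) (O.quad n A) (O.quad l B) =
      O.quad (n + l) (fun m => A (m + l) * B m) -
      koszulSign R i j • O.quad (n + l) (fun m => B (m + n) * A m) -
      (if n + l = 0 then signedSum n fun m => supertrace p (A (m - n) * B m) else 0) • 1 := by
  have hexpand : twistedCommutator (koszulSign R i j) (O.quad n A) (O.quad l B) =
      ∑ s, ∑ t, ∑ s', ∑ t', twistedCommutator (koszulSign R i j) (O.mode s t n fun m => A m s t)
        (O.mode s' t' l fun m => B m s' t') := by
    simp only [O.quad_apply n A, map_sum, LinearMap.sum_apply]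
    simp only [O.quad_apply l B, map_sum]
  rw [hexpand]
  simp only [O.bracket_mode_mode_of_isSuperHomogeneous hA hB, Finset.sum_sub_distrib]
  refine congrArg₂ _ (congrArg₂ _ ?_ ?_) ?_
  · rw [quad_mul]
    simp only [ite_smul, one_smul, zero_smul, Finset.sum_ite_irrel, Finset.sum_const_zero,
      Finset.sum_ite_eq, Finset.mem_univ, if_true]
    exact Finset.sum_congr rfl fun s _ => Finset.sum_comm
  · rw [quad_mul]
    simp only [ite_smul, zero_smul, Finset.sum_ite_eq, Finset.mem_univ, if_true, Finset.smul_sum]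
    rw [Finset.sum_comm_cycle]
    exact Finset.sum_congr rfl fun s _ => Finset.sum_comm
  · by_cases hn : n + l = 0
    · simp [hn, supertrace, Matrix.mul_apply, Finset.mul_sum, signedSum_sum, signedSum_mul_left,
        Finset.sum_smul, mul_smul, ite_and]
    · simp [hn]

theorem commutator_quad {A B : ℤ → Matrix K K R} {j : ZMod 2} (hA : IsSuperHomogeneous p A 0)
    (hB : IsSuperHomogeneous p B j) (n l : ℤ) :
    O.quad n A * O.quad l B - O.quad l B * O.quad n A =
      O.quad (n + l) (fun m => A (m + l) * B m - B (m + n) * A m) -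
      (if n + l = 0 then signedSum n fun m => supertrace p (A (m - n) * B m) else 0) • 1 := by
  have hbracket := O.bracket_quad hA hB n l
  rwa [koszulSign_zero_left, twistedCommutator_apply, one_smul, one_smul, ← map_sub] at hbracket

theorem anticommutator_quad {A B : ℤ → Matrix K K R} (hA : IsSuperHomogeneous p A 1)
    (hB : IsSuperHomogeneous p B 1) (n l : ℤ) :
    O.quad n A * O.quad l B + O.quad l B * O.quad n A =
      O.quad (n + l) (fun m => A (m + l) * B m + B (m + n) * A m) -
      (if n + l = 0 then signedSum n fun m => supertrace p (A (m - n) * B m) else 0) • 1 := by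
  have hbracket := O.bracket_quad hA hB n l
  rwa [koszulSign_one_one, twistedCommutator_apply, neg_one_smul, neg_one_smul, sub_neg_eq_add,
    sub_neg_eq_add, ← map_add] at hbracket

section TwoColours

variable {R W : Type*} [CommRing R] [AddCommGroup W] [Module R W] (O : SuperOscillator R ![0, 1] W)

theorem quad_diagonal (n : ℤ) (a b : ℤ → R) :
    O.quad n (fun m => !![a m, 0; 0, b m]) = O.mode 0 0 n a + O.mode 1 1 n b := by
  simp [quad_apply, ← Pi.zero_def]

theorem quad_antidiagonal (n : ℤ) (b c : ℤ → R) :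
    O.quad n (fun m => !![0, b m; c m, 0]) = O.mode 0 1 n b + O.mode 1 0 n c := by
  simp [quad_apply, ← Pi.zero_def]

end TwoColours

end SuperOscillator

namespace SuperOscillator

section CentralTerm

variable {K W : Type*} [DecidableEq K] [Fintype K] {p : K → ZMod 2} [AddCommGroup W] [Module ℂ W]
  (O : SuperOscillator ℂ p W) {A B C : ℤ → Matrix K K ℂ} {n m : ℤ} {z : ℂ}

theorem ite_eq_neg_mul_deltaZ {x : ℂ} (hx : m = -n → x = -z) :
    (if -(n + m) = 0 then x else 0) = -(z * deltaZ (n + m)) := by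
  simp only [neg_eq_zero, deltaZ]
  split_ifs with h
  · rw [hx (eq_neg_of_add_eq_zero_right h), mul_one]
  · rw [mul_zero, neg_zero]

theorem commutator_quad_add_smul_one {j : ZMod 2} {a b : ℂ} (hA : IsSuperHomogeneous p A 0)
    (hB : IsSuperHomogeneous p B j) (hsymbol : ∀ k, A (k - m) * B k - B (k - n) * A k = C k)
    (hcocycle : m = -n → signedSum (-n) (fun k => supertrace p (A (k + n) * B k)) = -z) :
    (O.quad (-n) A + a • 1) * (O.quad (-m) B + b • 1) -
        (O.quad (-m) B + b • 1) * (O.quad (-n) A + a • 1) =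
      O.quad (-(n + m)) C + (z * deltaZ (n + m)) • 1 := by
  have hscalar (X Y : Module.End ℂ W) :
      (X + a • 1) * (Y + b • 1) - (Y + b • 1) * (X + a • 1) = X * Y - Y * X := by
    simp only [add_mul, mul_add, smul_mul_assoc, mul_smul_comm, one_mul, mul_one]
    module
  simp only [hscalar, commutator_quad _ hA hB, ← sub_eq_add_neg, hsymbol, sub_neg_eq_add]
  rw [← neg_add', ite_eq_neg_mul_deltaZ hcocycle, neg_smul, sub_neg_eq_add]

theorem commutator_quad_add_smul_one_quad {a : ℂ} (hA : IsSuperHomogeneous p A 0)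
    (hB : IsSuperHomogeneous p B 1)
    (hsymbol : ∀ k, A (k - m) * B k - B (k - n) * A k = C k) :
    (O.quad (-n) A + a • 1) * O.quad (-m) B - O.quad (-m) B * (O.quad (-n) A + a • 1) =
      O.quad (-(n + m)) C := by
  have hcocycle (_ : m = -n) :
      signedSum (-n) (fun k => supertrace p (A (k + n) * B k)) = -0 := by
    simp [hA.supertrace_mul_eq_zero hB, signedSum]
  simpa only [zero_smul, add_zero, zero_mul] using
    O.commutator_quad_add_smul_one (b := 0) hA hB hsymbol hcocycle

theorem anticommutator_quad_of_symbol (hA : IsSuperHomogeneous p A 1)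
    (hB : IsSuperHomogeneous p B 1) (hsymbol : ∀ k, A (k - m) * B k + B (k - n) * A k = C k)
    (hcocycle : m = -n → signedSum (-n) (fun k => supertrace p (A (k + n) * B k)) = -z) :
    O.quad (-n) A * O.quad (-m) B + O.quad (-m) B * O.quad (-n) A =
      O.quad (-(n + m)) C + (z * deltaZ (n + m)) • 1 := by
  simp only [anticommutator_quad _ hA hB, ← sub_eq_add_neg, hsymbol, sub_neg_eq_add]
  rw [← neg_add', ite_eq_neg_mul_deltaZ hcocycle, neg_smul, sub_neg_eq_add]

end CentralTerm

variable {W : Type*} [AddCommGroup W] [Module ℂ W] (O : SuperOscillator ℂ ![0, 1] W) (lam mu : ℂ)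

/-- The coefficients of the bilinear operator representing `ℒ_n`; here and below the index `0` is
the even pair `β`, `γ` and the index `1` the odd pair `τ`, `ε`. -/
def symbolL (n k : ℤ) : Matrix (Fin 2) (Fin 2) ℂ :=
  !![k - mu - (n + 1) * (lam + 1) / 2, 0; 0, k - mu - (n + 1) * lam / 2]

/-- The coefficients of the bilinear operator representing `H_n`. -/
def symbolH : Matrix (Fin 2) (Fin 2) ℂ := !![lam - 1, 0; 0, lam]

/-- The coefficients of the bilinear operator representing `G⁺_{n-1/2}`. -/
def symbolGPlus : Matrix (Fin 2) (Fin 2) ℂ := !![0, 0; (Real.sqrt 2 : ℂ), 0]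

/-- The coefficients of the bilinear operator representing `G⁻_{n+1/2}`. -/
def symbolGMinus (n k : ℤ) : Matrix (Fin 2) (Fin 2) ℂ :=
  !![0, (Real.sqrt 2 : ℂ) * (k - mu - (n + 1) * lam); 0, 0]

theorem isSuperHomogeneous_symbolL (n : ℤ) : IsSuperHomogeneous ![0, 1] (symbolL lam mu n) 0 :=
  isSuperHomogeneous_diagonal _ _

theorem isSuperHomogeneous_symbolH : IsSuperHomogeneous ![0, 1] (fun _ => symbolH lam) 0 :=
  isSuperHomogeneous_diagonal _ _

theorem isSuperHomogeneous_symbolGPlus : IsSuperHomogeneous ![0, 1] (fun _ => symbolGPlus) 1 :=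
  isSuperHomogeneous_antidiagonal _ _

theorem isSuperHomogeneous_symbolGMinus (n : ℤ) :
    IsSuperHomogeneous ![0, 1] (symbolGMinus lam mu n) 1 :=
  isSuperHomogeneous_antidiagonal _ _

theorem ofReal_sqrt_two_mul_self : (Real.sqrt 2 : ℂ) * Real.sqrt 2 = 2 := by
  rw [← Complex.ofReal_mul, Real.mul_self_sqrt zero_le_two, Complex.ofReal_ofNat]

/-- The operator representing `ℒ_n`. Its scalar part is `((n + 1) / 2) * (μ δ_{n,0})`. -/
def n2L (n : ℤ) : Module.End ℂ W := O.quad (-n) (symbolL lam mu n) + (mu / 2 * deltaZ n) • 1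

/-- The operator representing `H_n`. -/
def n2H (n : ℤ) : Module.End ℂ W := O.quad (-n) (fun _ => symbolH lam) + (mu * deltaZ n) • 1

/-- The operator representing `G⁺_{n-1/2}`. -/
def n2GPlus (n : ℤ) : Module.End ℂ W := O.quad (-n) fun _ => symbolGPlus

/-- The operator representing `G⁻_{n+1/2}`. -/
def n2GMinus (n : ℤ) : Module.End ℂ W := O.quad (-n) (symbolGMinus lam mu n)

theorem commutator_n2L_n2L (n m : ℤ) :
    O.n2L lam mu n * O.n2L lam mu m - O.n2L lam mu m * O.n2L lam mu n =
      ((n : ℂ) - m) • O.n2L lam mu (n + m) +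
        ((3 - 6 * lam) / 12 * ((n : ℂ) ^ 3 - n) * deltaZ (n + m)) • 1 := by
  refine (O.commutator_quad_add_smul_one (C := ((n : ℂ) - m) • symbolL lam mu (n + m))
    (z := ((n : ℂ) - m) * (mu / 2) + (3 - 6 * lam) / 12 * ((n : ℂ) ^ 3 - n))
    (isSuperHomogeneous_symbolL _ _ _) (isSuperHomogeneous_symbolL _ _ _) (fun k => ?_) ?_).trans ?_
  · ext i j
    fin_cases i <;> fin_cases j <;> simp [symbolL] <;> ring
  · rintro rfl
    rw [signedSum_affine _ (-1) (mu + (1 - n) * ((1 + n) * (2 * lam + 1) - 2 * n) / 4)]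
    · push_cast
      ring
    · intro k
      simp only [symbolL, Matrix.mul_fin_two, supertrace_fin_two]
      push_cast
      ring
  · rw [n2L, map_smul]
    module

theorem commutator_n2L_n2H (n m : ℤ) :
    O.n2L lam mu n * O.n2H lam mu m - O.n2H lam mu m * O.n2L lam mu n =
      (-(m : ℂ)) • O.n2H lam mu (n + m) := by
  refine (O.commutator_quad_add_smul_one (C := (-(m : ℂ)) • fun _ => symbolH lam)
    (z := -m * mu) (isSuperHomogeneous_symbolL _ _ _) (isSuperHomogeneous_symbolH _)
    (fun k => ?_) ?_).trans ?_
  · ext i j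
    fin_cases i <;> fin_cases j <;> simp [symbolL, symbolH] <;> ring
  · rintro rfl
    rw [signedSum_affine _ (-1) (mu + (1 - n) / 2)]
    · push_cast
      ring
    · intro k
      rw [symbolL, symbolH, Matrix.mul_fin_two, supertrace_fin_two]
      push_cast
      ring
  · rw [n2H, map_smul]
    module

theorem commutator_n2H_n2H (n m : ℤ) :
    O.n2H lam mu n * O.n2H lam mu m - O.n2H lam mu m * O.n2H lam mu n =
      ((3 - 6 * lam) / 3 * (n : ℂ) * deltaZ (n + m)) • 1 := by
  refine (O.commutator_quad_add_smul_one (C := 0) (z := (3 - 6 * lam) / 3 * n)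
    (isSuperHomogeneous_symbolH _) (isSuperHomogeneous_symbolH _) (fun _ => sub_self _) ?_).trans ?_
  · rintro rfl
    rw [signedSum_affine _ 0 (1 - 2 * lam)]
    · push_cast
      ring
    · intro k
      rw [symbolH, Matrix.mul_fin_two, supertrace_fin_two]
      ring
  · rw [map_zero, zero_add]

theorem commutator_n2L_n2GPlus (n m : ℤ) :
    O.n2L lam mu n * O.n2GPlus m - O.n2GPlus m * O.n2L lam mu n =
      ((n : ℂ) / 2 - m + 1 / 2) • O.n2GPlus (n + m) := by
  refine (O.commutator_quad_add_smul_one_quad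
    (C := ((n : ℂ) / 2 - m + 1 / 2) • fun _ => symbolGPlus) (isSuperHomogeneous_symbolL _ _ _)
    isSuperHomogeneous_symbolGPlus fun k => ?_).trans (map_smul _ _ _)
  ext i j
  fin_cases i <;> fin_cases j <;> simp [symbolL, symbolGPlus]
  ring

theorem commutator_n2L_n2GMinus (n m : ℤ) :
    O.n2L lam mu n * O.n2GMinus lam mu m - O.n2GMinus lam mu m * O.n2L lam mu n =
      ((n : ℂ) / 2 - m - 1 / 2) • O.n2GMinus lam mu (n + m) := by
  refine (O.commutator_quad_add_smul_one_quad
    (C := ((n : ℂ) / 2 - m - 1 / 2) • symbolGMinus lam mu (n + m))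
    (isSuperHomogeneous_symbolL _ _ _) (isSuperHomogeneous_symbolGMinus _ _ _)
    fun k => ?_).trans (map_smul _ _ _)
  ext i j
  fin_cases i <;> fin_cases j <;> simp [symbolL, symbolGMinus]
  ring

theorem commutator_n2H_n2GPlus (n m : ℤ) :
    O.n2H lam mu n * O.n2GPlus m - O.n2GPlus m * O.n2H lam mu n = O.n2GPlus (n + m) := by
  refine O.commutator_quad_add_smul_one_quad (isSuperHomogeneous_symbolH _)
    isSuperHomogeneous_symbolGPlus fun _ => ?_
  ext i j
  fin_cases i <;> fin_cases j <;> simp [symbolH, symbolGPlus]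
  ring

theorem commutator_n2H_n2GMinus (n m : ℤ) :
    O.n2H lam mu n * O.n2GMinus lam mu m - O.n2GMinus lam mu m * O.n2H lam mu n =
      -O.n2GMinus lam mu (n + m) := by
  refine (O.commutator_quad_add_smul_one_quad (C := -symbolGMinus lam mu (n + m))
    (isSuperHomogeneous_symbolH _) (isSuperHomogeneous_symbolGMinus _ _ _) fun k => ?_).trans
    (map_neg _ _)
  ext i j
  fin_cases i <;> fin_cases j <;> simp [symbolH, symbolGMinus]
  ring

theorem anticommutator_n2GPlus_n2GMinus (n m : ℤ) :
    O.n2GPlus n * O.n2GMinus lam mu m + O.n2GMinus lam mu m * O.n2GPlus n =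
      (2 : ℂ) • O.n2L lam mu (n + m) + ((n : ℂ) - m - 1) • O.n2H lam mu (n + m) +
        ((3 - 6 * lam) / 3 * ((n : ℂ) ^ 2 - n) * deltaZ (n + m)) • 1 := by
  have hsqrt := ofReal_sqrt_two_mul_self
  refine (O.anticommutator_quad_of_symbol
    (C := (2 : ℂ) • symbolL lam mu (n + m) + ((n : ℂ) - m - 1) • fun _ => symbolH lam)
    (z := mu + ((n : ℂ) - m - 1) * mu + (3 - 6 * lam) / 3 * ((n : ℂ) ^ 2 - n))
    isSuperHomogeneous_symbolGPlus (isSuperHomogeneous_symbolGMinus _ _ _)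
    (fun k => ?_) ?_).trans ?_
  · ext i j
    fin_cases i <;> fin_cases j <;> simp [symbolGPlus, symbolGMinus, symbolL, symbolH]
    · linear_combination ((k : ℂ) - n - mu - (m + 1) * lam) * hsqrt
    · linear_combination ((k : ℂ) - mu - (m + 1) * lam) * hsqrt
  · rintro rfl
    rw [signedSum_affine _ (-2) (2 * (mu + (1 - n) * lam))]
    · push_cast
      ring
    · intro k
      rw [symbolGPlus, symbolGMinus, Matrix.mul_fin_two, supertrace_fin_two]
      push_cast
      linear_combination -((k : ℂ) - mu - (-n + 1) * lam) * hsqrt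
  · rw [n2L, n2H, map_add, map_smul, map_smul]
    module

theorem anticommutator_n2GPlus_n2GPlus (n m : ℤ) :
    O.n2GPlus n * O.n2GPlus m + O.n2GPlus m * O.n2GPlus n = 0 := by
  refine (O.anticommutator_quad_of_symbol (C := 0) (z := 0) isSuperHomogeneous_symbolGPlus
    isSuperHomogeneous_symbolGPlus (fun k => ?_) fun _ => ?_).trans ?_
  · ext i j
    fin_cases i <;> fin_cases j <;> simp [symbolGPlus]
  · simp [symbolGPlus, signedSum, supertrace]
  · simp

theorem anticommutator_n2GMinus_n2GMinus (n m : ℤ) :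
    O.n2GMinus lam mu n * O.n2GMinus lam mu m + O.n2GMinus lam mu m * O.n2GMinus lam mu n = 0 := by
  refine (O.anticommutator_quad_of_symbol (C := 0) (z := 0) (isSuperHomogeneous_symbolGMinus _ _ _)
    (isSuperHomogeneous_symbolGMinus _ _ _) (fun k => ?_) fun _ => ?_).trans ?_
  · ext i j
    fin_cases i <;> fin_cases j <;> simp [symbolGMinus]
  · simp [symbolGMinus, signedSum, supertrace]
  · simp

theorem isN2RepOn_top : IsN2RepOn (⊤ : Submodule ℂ W) (3 - 6 * lam) (O.n2L lam mu) (O.n2H lam mu)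
    O.n2GPlus (O.n2GMinus lam mu) := by
  have apply_eq {X Y : Module.End ℂ W} (h : X = Y) (w : W) : X w = Y w := by rw [h]
  exact ⟨fun n m w _ => apply_eq (O.commutator_n2L_n2L lam mu n m) w,
    fun n m w _ => apply_eq (O.commutator_n2L_n2H lam mu n m) w,
    fun n m w _ => apply_eq (O.commutator_n2L_n2GPlus lam mu n m) w,
    fun n m w _ => apply_eq (O.commutator_n2L_n2GMinus lam mu n m) w,
    fun n m w _ => apply_eq (O.anticommutator_n2GPlus_n2GMinus lam mu n m) w,
    fun n m w _ => apply_eq (O.anticommutator_n2GPlus_n2GPlus n m) w,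
    fun n m w _ => apply_eq (O.anticommutator_n2GMinus_n2GMinus lam mu n m) w,
    fun n m w _ => apply_eq (O.commutator_n2H_n2H lam mu n m) w,
    fun n m w _ => apply_eq (O.commutator_n2H_n2GPlus lam mu n m) w,
    fun n m w _ => apply_eq (O.commutator_n2H_n2GMinus lam mu n m) w⟩

theorem n2H_eq (n : ℤ) : O.n2H lam mu n =
    lam • O.mode 1 1 (-n) 1 + (lam - 1) • O.mode 0 0 (-n) 1 + (mu * deltaZ n) • 1 := by
  have hconst (c : ℂ) : (fun _ : ℤ => c) = c • 1 := by ext; simp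
  simp only [n2H, symbolH, quad_diagonal, hconst, map_smul]
  module

theorem n2L_eq (n : ℤ) : O.n2L lam mu n =
    -(O.mode 1 1 (-n) (fun k => -k + mu - (-n : ℤ) * lam + lam) +
      O.mode 0 0 (-n) (fun k => -k + mu - (-n : ℤ) * lam + lam)) +
    (((n : ℂ) + 1) / 2) • O.n2H lam mu n := by
  set c : ℤ → ℂ := fun k => -k + mu - (-n : ℤ) * lam + lam with hc
  have hsymbol : symbolL lam mu n = (((n : ℂ) + 1) / 2) • (fun _ => symbolH lam) -
      fun k => !![c k, 0; 0, c k] := by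
    ext k i j
    fin_cases i <;> fin_cases j <;> simp [symbolL, symbolH, hc] <;> ring
  have hdelta : mu / 2 * deltaZ n = ((n : ℂ) + 1) / 2 * (mu * deltaZ n) := by
    by_cases hn : n = 0 <;> simp [deltaZ, hn, div_eq_mul_inv, mul_comm]
  rw [n2L, n2H, hsymbol, map_sub, map_smul, quad_diagonal, hdelta]
  module

theorem n2GPlus_eq (n : ℤ) : O.n2GPlus n = (Real.sqrt 2 : ℂ) • O.mode 1 0 (-n) 1 := by
  have hconst : (fun _ : ℤ => (Real.sqrt 2 : ℂ)) = (Real.sqrt 2 : ℂ) • 1 := by ext; simp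
  refine (O.quad_antidiagonal (-n) 0 _).trans ?_
  rw [hconst, map_smul, map_zero, zero_add]

theorem n2GMinus_eq (n : ℤ) : O.n2GMinus lam mu n =
    (Real.sqrt 2 : ℂ) • O.mode 0 1 (-n) (fun k => k - mu - (n + 1) * lam) := by
  refine (O.quad_antidiagonal (-n) _ 0).trans ?_
  rw [map_zero, add_zero, ← map_smul]
  rfl

end SuperOscillator

namespace WeilModule

variable {ι W : Type*} [DecidableEq ι] [AddCommGroup W] [Module ℂ W] (M : WeilModule ι W)

/-- The operators `β(u_m)` (index `0`) and `τ(u_m)` (index `1`). -/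
def x (u : ι) (s : Fin 2) : ℤ → Module.End ℂ W := ![M.β u, M.τ u] s

/-- The operators `γ(u_m')` (index `0`) and `ε(u_m')` (index `1`). -/
def d (u : ι) (s : Fin 2) : ℤ → Module.End ℂ W := ![M.γ u, M.ε u] s

theorem bracket_x_x (u v : ι) (s : Fin 2) (m : ℤ) (t : Fin 2) (k : ℤ) :
    twistedCommutator (koszulSign ℂ (![0, 1] s) (![0, 1] t)) (M.x u s m) (M.x v t k) = 0 := by
  fin_cases s <;> fin_cases t <;>
    simp [twistedCommutator_apply, koszulSign, x, M.rel_ββ u m v k, M.rel_ττ u m v k,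
      M.rel_βτ u m v k, M.rel_βτ v k u m]

theorem bracket_d_d (u v : ι) (s : Fin 2) (m : ℤ) (t : Fin 2) (k : ℤ) :
    twistedCommutator (koszulSign ℂ (![0, 1] s) (![0, 1] t)) (M.d u s m) (M.d v t k) = 0 := by
  fin_cases s <;> fin_cases t <;>
    simp [twistedCommutator_apply, koszulSign, d, M.rel_γγ u m v k, M.rel_εε u m v k,
      M.rel_γε u m v k, M.rel_γε v k u m]

theorem bracket_d_x (u v : ι) (s : Fin 2) (m : ℤ) (t : Fin 2) (k : ℤ) :
    twistedCommutator (koszulSign ℂ (![0, 1] s) (![0, 1] t)) (M.d u s m) (M.x v t k) =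
      if u = v ∧ s = t ∧ m = k then 1 else 0 := by
  fin_cases s <;> fin_cases t <;>
    simp [twistedCommutator_apply, koszulSign, x, d, M.rel_γβ u m v k,
      M.rel_ετ u m v k, M.rel_γτ u m v k, M.rel_βε v k u m]

theorem eventually_apply_eq_zero {l : Filter ℤ} {A : ℤ → Module.End ℂ W}
    (hvac : ∀ᶠ m in l, A m M.vac = 0)
    (hx : ∀ v t k, ∃ c : ℂ, ∀ᶠ m in l, twistedCommutator c (A m) (M.x v t k) = 0)
    (hd : ∀ v t k, ∃ c : ℂ, ∀ᶠ m in l, twistedCommutator c (A m) (M.d v t k) = 0) (w : W) :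
    ∀ᶠ m in l, A m w = 0 := by
  let P : Submodule ℂ W :=
    { carrier := {w | ∀ᶠ m in l, A m w = 0}
      zero_mem' := .of_forall fun m => map_zero (A m)
      add_mem' := fun hv hw => by
        filter_upwards [hv, hw] with m hv hw
        rw [map_add, hv, hw, add_zero]
      smul_mem' := fun c w hw => by
        filter_upwards [hw] with m hw
        rw [map_smul, hw, smul_zero] }
  have stable {B : Module.End ℂ W} (hB : ∃ c : ℂ, ∀ᶠ m in l, twistedCommutator c (A m) B = 0)
      {w : W} (hw : w ∈ P) : B w ∈ P := by
    obtain ⟨c, hc⟩ := hB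
    filter_upwards [hc, hw] with m hc hw
    have hcw := LinearMap.congr_fun (sub_eq_zero.mp hc) w
    simpa [hw] using hcw
  have hP : P = ⊤ := M.cyclic P hvac fun u m w hw =>
    ⟨stable (hx u 0 m) hw, stable (hd u 0 m) hw, stable (hx u 1 m) hw, stable (hd u 1 m) hw⟩
  exact (hP ▸ Submodule.mem_top : w ∈ P)

theorem eventually_x_apply_eq_zero (u : ι) (s : Fin 2) (w : W) :
    ∀ᶠ m in atTop, M.x u s m w = 0 := by
  refine M.eventually_apply_eq_zero ?_ (fun v t k => ⟨_, .of_forall fun m =>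
    M.bracket_x_x u v s m t k⟩) (fun v t k => ⟨koszulSign ℂ (![0, 1] s) (![0, 1] t), ?_⟩) w
  · filter_upwards [eventually_gt_atTop 0] with m hm
    fin_cases s
    exacts [M.vac_β u m hm, M.vac_τ u m hm]
  · filter_upwards [eventually_ne_atTop k] with m hm
    rw [twistedCommutator_eq_neg_smul_swap (koszulSign_mul_swap _ _), bracket_d_x,
      if_neg fun h => hm h.2.2.symm, smul_zero]

theorem eventually_d_apply_eq_zero (u : ι) (s : Fin 2) (w : W) :
    ∀ᶠ m in atBot, M.d u s m w = 0 := by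
  refine M.eventually_apply_eq_zero ?_ (fun v t k => ⟨koszulSign ℂ (![0, 1] s) (![0, 1] t), ?_⟩)
    (fun v t k => ⟨_, .of_forall fun m => M.bracket_d_d u v s m t k⟩) w
  · filter_upwards [eventually_le_atBot 0] with m hm
    fin_cases s
    exacts [M.vac_γ u m hm, M.vac_ε u m hm]
  · filter_upwards [eventually_ne_atBot k] with m hm
    rw [bracket_d_x, if_neg fun h => hm h.2.2]

/-- The oscillators of a Weil module attached to a single basis vector `u`. -/
def oscillator (u : ι) : SuperOscillator ℂ ![0, 1] W where
  x := M.x u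
  d := M.d u
  bracket_x_x := M.bracket_x_x u u
  bracket_d_d := M.bracket_d_d u u
  bracket_d_x s m t k := by simpa using M.bracket_d_x u u s m t k
  eventually_x := M.eventually_x_apply_eq_zero u
  eventually_d := M.eventually_d_apply_eq_zero u

theorem noβγ_eq (u : ι) (a b : ℤ) : M.noβγ u a u b = (M.oscillator u).normalOrdered 0 a 0 b := by
  simp [noβγ, SuperOscillator.normalOrdered, oscillator, x, d, koszulSign]

theorem noτε_eq (u : ι) (a b : ℤ) : M.noτε u a u b = (M.oscillator u).normalOrdered 1 a 1 b := by
  simp [noτε, SuperOscillator.normalOrdered, oscillator, x, d, koszulSign]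

theorem γ_mul_τ_eq (u : ι) (a b : ℤ) :
    M.γ u b * M.τ u a = (M.oscillator u).normalOrdered 1 a 0 b := by
  simp [SuperOscillator.normalOrdered, oscillator, x, d, koszulSign, M.rel_γτ]

theorem β_mul_ε_eq (u : ι) (a b : ℤ) :
    M.β u a * M.ε u b = (M.oscillator u).normalOrdered 0 a 1 b := by
  simp [SuperOscillator.normalOrdered, oscillator, x, d, koszulSign, M.rel_βε]

end WeilModule

open WeilModule SuperOscillator in
theorem n2_on_weil_complex_of_Witt_module_general
    (lam mu : ℂ) {ι W : Type*} [DecidableEq ι] [AddCommGroup W] [Module ℂ W]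
    (M : WeilModule ι W) (u : ι) (ΘL ΘH Θh Θp : ℤ → Module.End ℂ W)
    (hΘL : ∀ (n : ℤ) (w : W), ΘL n w = ∑ᶠ m : ℤ,
      ((-(m : ℂ) + mu - (n : ℂ) * lam + lam) • (M.noτε u (m + n) u m + M.noβγ u (m + n) u m)) w)
    (hΘH : ∀ (n : ℤ) (w : W), ΘH n w = lam • (∑ᶠ m : ℤ, (M.noτε u m u (m + n)) w)
      + (lam - 1) • (∑ᶠ m : ℤ, (M.noβγ u m u (m + n)) w) + (mu * deltaZ n) • w)
    (hΘh : ∀ (n : ℤ) (w : W), Θh n w = ∑ᶠ m : ℤ, (M.γ u (m + n) * M.τ u m) w)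
    (hΘp : ∀ (n : ℤ) (w : W), Θp n w = ∑ᶠ m : ℤ,
      (((m : ℂ) - mu - ((n : ℂ) + 1) * lam) • (M.β u (m - n) * M.ε u m)) w) :
    IsN2RepOn (⊤ : Submodule ℂ W) (3 - 6 * lam) (fun n => -ΘL (-n) + (((n : ℂ) + 1) / 2) • ΘH n) ΘH
      (fun n => (Real.sqrt 2 : ℂ) • Θh n) (fun n => (Real.sqrt 2 : ℂ) • Θp n) := by
  simp only [noτε_eq, noβγ_eq, γ_mul_τ_eq, β_mul_ε_eq, smul_add] at hΘL hΘH hΘh hΘp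
  set O := M.oscillator u
  have hL (n : ℤ) := ((O.isLocalSum_mode 1 1 n _).add (O.isLocalSum_mode 0 0 n _)).eq_of_apply
    (hΘL n)
  have hH : ΘH = O.n2H lam mu := by
    ext n w
    simp only [hΘH, n2H_eq, LinearMap.add_apply, LinearMap.smul_apply, Module.End.one_apply,
      (O.isLocalSum_normalOrdered_add _ _ n w).2]
  have hh (n : ℤ) := (O.isLocalSum_normalOrdered_add 1 0 n).eq_of_apply (hΘh n)
  have hp (n : ℤ) := (O.isLocalSum_mode 0 1 (-n) _).eq_of_apply (hΘp n)
  simp only [hL, hH, hh, hp, ← n2L_eq, ← n2GPlus_eq, ← n2GMinus_eq]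
  exact O.isN2RepOn_top lam mu

open WeilModule in
/-- For every `λ, μ ∈ ℂ` the operators
`θ(L_n) = Σ_m (−m+μ−nλ+λ)(:τ(u_{m+n})ε(u_m'): + :β(u_{m+n})γ(u_m'):)`,
`θ(H_n) = λ Σ_m :τ(u_m)ε(u_{m+n}'): + (λ−1) Σ_m :β(u_m)γ(u_{m+n}'): + μδ_{n,0}`,
`θ(G⁺_{n−1/2}) = √2 Σ_m γ(u_{m+n}')τ(u_m)`,
`θ(G⁻_{n+1/2}) = √2 Σ_m (m−μ−(n+1)λ) β(u_{m−n})ε(u_m')` and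
`θ(ℒ_n) = −θ(L_{−n}) + ((n+1)/2)θ(H_n)` define a representation of the `N = 2`
superconformal algebra on `W^{∞/2+*}(F_{λ,μ})` with central charge `3 − 6λ`. -/
theorem n2_on_weil_complex_of_Witt_module
    (lam mu : ℂ) (W : Type*) [AddCommGroup W] [Module ℂ W]
    (M : WeilModule PUnit W)
    (ΘL ΘH Θh Θp : ℤ → Module.End ℂ W)
    -- local finiteness of all the quadratic sums
    (hfinL : ∀ (n : ℤ) (w : W), (Function.support fun m : ℤ =>
        ((-(m : ℂ) + mu - (n : ℂ) * lam + lam) •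
          (M.noτε ⟨⟩ ((m + n : ℤ)) ⟨⟩ m + M.noβγ ⟨⟩ ((m + n : ℤ)) ⟨⟩ m)) w).Finite)
    (hfinHτ : ∀ (n : ℤ) (w : W), (Function.support fun m : ℤ => (M.noτε ⟨⟩ m ⟨⟩ ((m + n : ℤ))) w).Finite)
    (hfinHβ : ∀ (n : ℤ) (w : W), (Function.support fun m : ℤ => (M.noβγ ⟨⟩ m ⟨⟩ ((m + n : ℤ))) w).Finite)
    (hfinh : ∀ (n : ℤ) (w : W), (Function.support fun m : ℤ => (M.γ ⟨⟩ ((m + n : ℤ)) * M.τ ⟨⟩ m) w).Finite)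
    (hfinp : ∀ (n : ℤ) (w : W), (Function.support fun m : ℤ =>
        (((m : ℂ) - mu - ((n : ℂ) + 1) * lam) • (M.β ⟨⟩ ((m - n : ℤ)) * M.ε ⟨⟩ m)) w).Finite)
    -- the defining formulas (3.5), (3.6) for the operators
    (hΘL : ∀ (n : ℤ) (w : W), ΘL n w = ∑ᶠ m : ℤ,
        ((-(m : ℂ) + mu - (n : ℂ) * lam + lam) •
          (M.noτε ⟨⟩ ((m + n : ℤ)) ⟨⟩ m + M.noβγ ⟨⟩ ((m + n : ℤ)) ⟨⟩ m)) w)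
    (hΘH : ∀ (n : ℤ) (w : W), ΘH n w = lam • (∑ᶠ m : ℤ, (M.noτε ⟨⟩ m ⟨⟩ ((m + n : ℤ))) w)
        + (lam - 1) • (∑ᶠ m : ℤ, (M.noβγ ⟨⟩ m ⟨⟩ ((m + n : ℤ))) w)
        + (mu * deltaZ n) • w)
    (hΘh : ∀ (n : ℤ) (w : W), Θh n w = ∑ᶠ m : ℤ, (M.γ ⟨⟩ ((m + n : ℤ)) * M.τ ⟨⟩ m) w)
    (hΘp : ∀ (n : ℤ) (w : W), Θp n w = ∑ᶠ m : ℤ,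
        (((m : ℂ) - mu - ((n : ℂ) + 1) * lam) • (M.β ⟨⟩ ((m - n : ℤ)) * M.ε ⟨⟩ m)) w) :
    IsN2RepOn (⊤ : Submodule ℂ W) (3 - 6 * lam)
      (fun n => -ΘL (-n) + (((n : ℂ) + 1) / 2) • ΘH n)
      ΘH
      (fun n => (Real.sqrt 2 : ℂ) • Θh n)
      (fun n => (Real.sqrt 2 : ℂ) • Θp n) :=
  n2_on_weil_complex_of_Witt_module_general lam mu M ⟨⟩ ΘL ΘH Θh Θp hΘL hΘH hΘh hΘp
end
end

section
/- Let α ∈ ℤ. The Lie superalgebra of exterior derivations Der_ext S'(2,α) = Der S'(2,α)/Inn S'(2,α) is purely even and isomorphic to 𝔰𝔩(2,ℂ): it is spanned by the classes of three even derivations 𝖤, 𝖧, 𝖥 of S'(2,α) satisfying [𝖧,𝖤] = 2𝖤, [𝖧,𝖥] = −2𝖥, [𝖤,𝖥] = 𝖧 modulo inner derivations, whose action on the odd basis elements is 𝖤(𝔥_k^α) = 𝔵_{k−1+α}, 𝖤(𝔶_k^α) = 𝔭_{k−1+α}, 𝖥(𝔵_k) = 𝔥_{k+1−α}^α, 𝖥(𝔭_k)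 = 𝔶_{k+1−α}^α, 𝖧(𝔵_k) = 𝔵_k, 𝖧(𝔥_k^α) = −𝔥_k^α, 𝖧(𝔭_k) = 𝔭_k, 𝖧(𝔶_k^α) = −𝔶_k^α. -/
noncomputable section

/-- The Laurent polynomial ring `ℂ[t,t⁻¹]`, as the space of finitely supported
functions `ℤ →₀ ℂ` (the function `f` represents `Σ_n f(n)tⁿ`). -/
abbrev Lau : Type := ℤ →₀ ℂ

/-- The supercommutative superalgebra `A = ℂ[t,t⁻¹] ⊗ Λ(θ₁,θ₂)`, an element
`(a,b,c,d)` representing `a + bθ₁ + cθ₂ + dθ₁θ₂`. -/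
abbrev GA : Type := Lau × Lau × Lau × Lau

/-- The derivative `∂_t` on `ℂ[t,t⁻¹]`: `tⁿ ↦ n tⁿ⁻¹`. -/
def tder : Lau →ₗ[ℂ] Lau :=
  Finsupp.lsum ℂ fun n => (n : ℂ) • Finsupp.lsingle (n - 1)

/-- Multiplication by `t^k` on `ℂ[t,t⁻¹]`. -/
def tshift (k : ℤ) : Lau →ₗ[ℂ] Lau := Finsupp.lmapDomain ℂ ℂ (· + k)

/-- Components of `A`. -/
def pr0 : GA →ₗ[ℂ] Lau := LinearMap.fst ℂ Lau (Lau × Lau × Lau)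
def pr1 : GA →ₗ[ℂ] Lau :=
  (LinearMap.fst ℂ Lau (Lau × Lau)).comp (LinearMap.snd ℂ Lau (Lau × Lau × Lau))
def pr2 : GA →ₗ[ℂ] Lau :=
  ((LinearMap.fst ℂ Lau Lau).comp (LinearMap.snd ℂ Lau (Lau × Lau))).comp
    (LinearMap.snd ℂ Lau (Lau × Lau × Lau))
def pr3 : GA →ₗ[ℂ] Lau :=
  ((LinearMap.snd ℂ Lau Lau).comp (LinearMap.snd ℂ Lau (Lau × Lau))).comp
    (LinearMap.snd ℂ Lau (Lau × Lau × Lau))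

/-- Build an endomorphism of `A` from its four components. -/
def mk4 (f0 f1 f2 f3 : GA →ₗ[ℂ] Lau) : Module.End ℂ GA :=
  f0.prod (f1.prod (f2.prod f3))

/-- The even derivation `∂_t` of `A`. -/
def Dt : Module.End ℂ GA :=
  mk4 (tder.comp pr0) (tder.comp pr1) (tder.comp pr2) (tder.comp pr3)

/-- The odd (left) derivation `∂₁ = ∂/∂θ₁` of `A`. -/
def Dθ1 : Module.End ℂ GA := mk4 pr1 0 pr3 0

/-- The odd (left) derivation `∂₂ = ∂/∂θ₂` of `A`. -/
def Dθ2 : Module.End ℂ GA := mk4 pr2 (-pr3) 0 0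

/-- Multiplication by `θ₁` on `A`. -/
def Mθ1 : Module.End ℂ GA := mk4 0 pr0 0 pr2

/-- Multiplication by `θ₂` on `A`. -/
def Mθ2 : Module.End ℂ GA := mk4 0 0 pr0 (-pr1)

/-- Multiplication by `t^k` on `A`. -/
def Mt (k : ℤ) : Module.End ℂ GA :=
  mk4 ((tshift k).comp pr0) ((tshift k).comp pr1) ((tshift k).comp pr2) ((tshift k).comp pr3)

/-- `ℒ_n^α = −tⁿ(t∂_t + (1/2)(n+α+1)(θ₁∂₁ + θ₂∂₂))`. -/
def Lop (α : ℂ) (n : ℤ) : Module.End ℂ GA :=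
  -(Mt (n + 1) * Dt + (((n : ℂ) + α + 1) / 2) • (Mt n * (Mθ1 * Dθ1 + Mθ2 * Dθ2)))

/-- `E_n = tⁿθ₂∂₁`. -/
def Eop (n : ℤ) : Module.End ℂ GA := Mt n * Mθ2 * Dθ1

/-- `H_n = tⁿ(θ₂∂₂ − θ₁∂₁)`. -/
def Hop (n : ℤ) : Module.End ℂ GA := Mt n * Mθ2 * Dθ2 - Mt n * Mθ1 * Dθ1

/-- `F_n = tⁿθ₁∂₂`. -/
def Fop (n : ℤ) : Module.End ℂ GA := Mt n * Mθ1 * Dθ2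

/-- `𝔥_n^α = tⁿθ₂∂_t − (n+α)tⁿ⁻¹θ₁θ₂∂₁`. -/
def hop (α : ℂ) (n : ℤ) : Module.End ℂ GA :=
  Mt n * Mθ2 * Dt - ((n : ℂ) + α) • (Mt (n - 1) * Mθ1 * Mθ2 * Dθ1)

/-- `𝔭_n = −tⁿ⁺¹∂₂`. -/
def pop (n : ℤ) : Module.End ℂ GA := -(Mt (n + 1) * Dθ2)

/-- `𝔵_n = tⁿ⁺¹∂₁`. -/
def xop (n : ℤ) : Module.End ℂ GA := Mt (n + 1) * Dθ1

/-- `𝔶_n^α = tⁿθ₁∂_t + (n+α)tⁿ⁻¹θ₁θ₂∂₂`. -/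
def yop (α : ℂ) (n : ℤ) : Module.End ℂ GA :=
  Mt n * Mθ1 * Dt + ((n : ℂ) + α) • (Mt (n - 1) * Mθ1 * Mθ2 * Dθ2)

/-- The parity involution of `A = ℂ[t,t⁻¹] ⊗ Λ(θ₁,θ₂)` (identity on the even part,
`−1` on the odd part). -/
def sigmaGA : Module.End ℂ GA := mk4 pr0 (-pr1) (-pr2) pr3

/-- The supercommutator on `End(A)`, extended bilinearly from homogeneous elements
(for homogeneous `x, y` it equals `x∘y − (−1)^{p(x)p(y)} y∘x`, parity being measured
by conjugation by the parity involution). -/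
def sbr (x y : Module.End ℂ GA) : Module.End ℂ GA :=
  x * y - ((1 : ℂ) / 2) • ((y + sigmaGA * y * sigmaGA) * x)
    - ((1 : ℂ) / 2) • ((y - sigmaGA * y * sigmaGA) * (sigmaGA * x * sigmaGA))

/-- The generating set of the superalgebra `S'(2,α) ⊆ W(2)`: all the basis
elements `ℒ_n^α, E_n, H_n, F_n, 𝔥_n^α, 𝔭_n, 𝔵_n, 𝔶_n^α`. -/
def s2Gen (α : ℂ) : Set (Module.End ℂ GA) :=
  {e | ∃ n : ℤ, e = Lop α n ∨ e = Eop n ∨ e = Hop n ∨ e = Fop n ∨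
    e = hop α n ∨ e = pop n ∨ e = xop n ∨ e = yop α n}

/-- The superalgebra `S'(2,α)`, as the span of its basis inside `W(2) ⊆ End(A)`. -/
def s2Span (α : ℂ) : Submodule ℂ (Module.End ℂ GA) := Submodule.span ℂ (s2Gen α)

/-- `D` is an even derivation of `S'(2,α)`: it preserves parity and satisfies the
Leibniz rule `D[x,y] = [Dx,y] + [x,Dy]`. -/
def IsEvenDer (α : ℂ) (D : ↥(s2Span α) →ₗ[ℂ] ↥(s2Span α)) : Prop :=
  (∀ x z : ↥(s2Span α), (z : Module.End ℂ GA) = sigmaGA * (x : Module.End ℂ GA) * sigmaGA →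
    ((D z : Module.End ℂ GA)) = sigmaGA * (D x : Module.End ℂ GA) * sigmaGA) ∧
  (∀ x y z : ↥(s2Span α),
    (z : Module.End ℂ GA) = sbr (x : Module.End ℂ GA) (y : Module.End ℂ GA) →
    ((D z : Module.End ℂ GA)) = sbr (D x : Module.End ℂ GA) (y : Module.End ℂ GA)
      + sbr (x : Module.End ℂ GA) (D y : Module.End ℂ GA))

/-- `D` is an odd derivation of `S'(2,α)`: it reverses parity and satisfies the
Leibniz rule `D[x,y] = [Dx,y] + (−1)^{p(x)}[x,Dy]`. -/
def IsOddDer (α : ℂ) (D : ↥(s2Span α) →ₗ[ℂ] ↥(s2Span α)) : Prop :=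
  (∀ x z : ↥(s2Span α), (z : Module.End ℂ GA) = sigmaGA * (x : Module.End ℂ GA) * sigmaGA →
    ((D z : Module.End ℂ GA)) = -(sigmaGA * (D x : Module.End ℂ GA) * sigmaGA)) ∧
  (∀ x y z : ↥(s2Span α),
    (z : Module.End ℂ GA) = sbr (x : Module.End ℂ GA) (y : Module.End ℂ GA) →
    ((D z : Module.End ℂ GA)) = sbr (D x : Module.End ℂ GA) (y : Module.End ℂ GA)
      + sbr (sigmaGA * (x : Module.End ℂ GA) * sigmaGA) (D y : Module.End ℂ GA))

/-- `D` is a superderivation of `S'(2,α)`: a sum of an even and an odd derivation. -/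
def IsSuperDer (α : ℂ) (D : ↥(s2Span α) →ₗ[ℂ] ↥(s2Span α)) : Prop :=
  ∃ De Do, D = De + Do ∧ IsEvenDer α De ∧ IsOddDer α Do

/-- `D` is an inner derivation of `S'(2,α)`: `D = ad s` for some `s ∈ S'(2,α)`. -/
def IsInnerDer (α : ℂ) (D : ↥(s2Span α) →ₗ[ℂ] ↥(s2Span α)) : Prop :=
  ∃ s : ↥(s2Span α), ∀ x : ↥(s2Span α),
    ((D x : Module.End ℂ GA)) = sbr (s : Module.End ℂ GA) (x : Module.End ℂ GA)

/-!
The element `T = ℒ_0 + √-1 H_0` acts diagonally on the standard basis of `S'(2,α)`. Since the two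
terms contribute the real and the imaginary part of a weight, the weight spaces have dimension at
most two, and each of them is purely even or purely odd. Subtracting an inner derivation from a
derivation `D` makes it commute with `ad T`, so that it preserves the weight spaces. An odd
derivation must then vanish. An even one acts on each `E_n` and `F_n` by a scalar, and the Leibniz
rule forces these scalars to be `pn + q` and `pn - q`, which is the action of an element of the
span of `ℒ_0` and `H_0`. Once that is subtracted too, `D` kills the even part of `S'(2,α)` and is
determined by the images of `𝔶_0` and `𝔭_0` in their two-dimensional weight spaces, where the
Leibniz rule for `[𝔵_0, 𝔶_0]` leaves three free parameters: the combinations of `𝖤`, `𝖧`, `𝖥`.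
-/

/-! ### Supercommutators and diagonal operators -/

section SuperCommutator

variable (K : Type*) {A : Type*} [Field K] [Ring A] [Algebra K A]

/-- The supercommutator `xy − (−1)^{p(x)p(y)}yx` of an algebra whose parity automorphism is
conjugation by the involution `s`. The sign is encoded by splitting `y` into the even part
`(y + sys)/2` and the odd part `(y − sys)/2`, so that no homogeneity is assumed. -/
def superCommutator (s : A) : A →ₗ[K] A →ₗ[K] A :=
  LinearMap.mk₂ K
    (fun x y => x * y - ((1 : K) / 2) • ((y + s * y * s) * x)
      - ((1 : K) / 2) • ((y - s * y * s) * (s * x * s)))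
    (fun x x' y => by simp only [mul_add, add_mul]; module)
    (fun c x y => by simp only [smul_mul_assoc, mul_smul_comm]; module)
    (fun x y y' => by simp only [mul_add, add_mul, sub_mul]; module)
    (fun c x y => by simp only [smul_mul_assoc, mul_smul_comm, add_mul, sub_mul]; module)

variable {K}

lemma superCommutator_apply (s x y : A) :
    superCommutator K s x y = x * y - ((1 : K) / 2) • ((y + s * y * s) * x)
      - ((1 : K) / 2) • ((y - s * y * s) * (s * x * s)) := rfl

lemma superCommutator_of_conj_eq_smul {s x y : A} {c d : K} (hx : s * x * s = c • x)
    (hy : s * y * s = d • y) :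
    superCommutator K s x y = x * y - ((1 + d + (1 - d) * c) / 2) • (y * x) := by
  simp only [superCommutator_apply, hx, hy, add_mul, sub_mul, smul_mul_assoc, mul_smul_comm]
  module

lemma superCommutator_of_even_left [NeZero (2 : K)] {s u : A} (hu : s * u * s = u) (y : A) :
    superCommutator K s u y = u * y - y * u := by
  have half : (1 : K) / 2 + 1 / 2 = 1 := add_halves 1
  rw [superCommutator_apply, hu, sub_sub, ← smul_add, ← add_mul, add_add_sub_cancel, add_mul,
    smul_add, ← add_smul, half, one_smul]

lemma superCommutator_skew_of_even [NeZero (2 : K)] {s u : A} (hu : s * u * s = u) (y : A) :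
    superCommutator K s y u = -superCommutator K s u y := by
  have half : (1 : K) / 2 + 1 / 2 = 1 := add_halves 1
  rw [superCommutator_of_even_left hu, superCommutator_apply, hu, sub_self, zero_mul, smul_zero,
    sub_zero, add_mul, smul_add, ← add_smul, half, one_smul, neg_sub]

lemma conj_mul_conj {s : A} (hs : s * s = 1) (x y : A) :
    s * x * s * (s * y * s) = s * (x * y) * s := by
  calc s * x * s * (s * y * s) = s * x * (s * s) * y * s := by noncomm_ring
    _ = s * (x * y) * s := by rw [hs, mul_one, mul_assoc s x y]

lemma superCommutator_conj {s : A} (hs : s * s = 1) (x y : A) :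
    superCommutator K s (s * x * s) (s * y * s) = s * superCommutator K s x y * s := by
  simp only [superCommutator_apply, mul_sub, sub_mul, mul_add, add_mul, mul_smul_comm,
    smul_mul_assoc, conj_mul_conj hs]

lemma superCommutator_leibniz_of_even [NeZero (2 : K)] {s u : A} (hs : s * s = 1)
    (hu : s * u * s = u) (x y : A) :
    superCommutator K s u (superCommutator K s x y) =
      superCommutator K s (superCommutator K s u x) y +
        superCommutator K s x (superCommutator K s u y) := by
  have conj_commutator (z : A) : s * (u * z - z * u) * s = u * (s * z * s) - s * z * s * u := by
    rw [mul_sub, sub_mul, ← conj_mul_conj hs, ← conj_mul_conj hs, hu]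
  simp only [superCommutator_of_even_left hu]
  simp only [superCommutator_apply, conj_commutator]
  simp only [mul_add, add_mul, mul_sub, sub_mul, smul_add, smul_sub, smul_mul_assoc,
    mul_smul_comm, mul_assoc]
  module

end SuperCommutator

section DiagonalOperator

variable {ι K M : Type*} [CommRing K] [AddCommGroup M] [Module K M] (b : Module.Basis ι K M)

/-- The operator with eigenvalue `w i` on the basis vector `b i`. -/
def diagonalOp (w : ι → K) : Module.End K M := b.constr K fun i => w i • b i

@[simp] lemma diagonalOp_basis (w : ι → K) (i : ι) : diagonalOp b w (b i) = w i • b i :=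
  b.constr_basis K _ i

lemma repr_diagonalOp (w : ι → K) (x : M) (i : ι) :
    b.repr (diagonalOp b w x) i = w i * b.repr x i := by
  have : b.coord i ∘ₗ diagonalOp b w = w i • b.coord i := by
    refine b.ext fun j => ?_
    by_cases hij : j = i
    · subst hij; simp
    · simp [hij]
  exact LinearMap.congr_fun this x

lemma diagonalOp_mul_diagonalOp (w w' : ι → K) :
    diagonalOp b w * diagonalOp b w' = diagonalOp b (w * w') :=
  b.ext fun i => by simp [smul_smul, mul_comm]

lemma commute_diagonalOp (w w' : ι → K) : Commute (diagonalOp b w) (diagonalOp b w') := by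
  rw [Commute, SemiconjBy, diagonalOp_mul_diagonalOp, diagonalOp_mul_diagonalOp, mul_comm]

variable {b} [IsDomain K]

lemma mem_span_of_diagonalOp_eq_smul {w : ι → K} {c : K} {x : M}
    (hx : diagonalOp b w x = c • x) : x ∈ Submodule.span K (b '' {i | w i = c}) := by
  refine b.mem_span_image.2 fun i hi => ?_
  have h := repr_diagonalOp b w x i
  rw [hx, map_smul, Finsupp.smul_apply, smul_eq_mul] at h
  exact (mul_right_cancel₀ (Finsupp.mem_support_iff.1 hi) h).symm

lemma mem_span_of_commute_diagonalOp {w : ι → K} {D : Module.End K M}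
    (hD : Commute D (diagonalOp b w)) (i : ι) :
    D (b i) ∈ Submodule.span K (b '' {j | w j = w i}) := by
  apply mem_span_of_diagonalOp_eq_smul
  rw [← Module.End.mul_apply, ← hD.eq, Module.End.mul_apply, diagonalOp_basis, map_smul]

lemma commute_diagonalOp_of_commute {w w' : ι → K} (hw : ∀ i j, w i = w j → w' i = w' j)
    {D : Module.End K M} (hD : Commute D (diagonalOp b w)) : Commute D (diagonalOp b w') := by
  refine b.ext fun i => ?_
  have heigen : Submodule.span K (b '' {j | w j = w i}) ≤
      Module.End.eigenspace (diagonalOp b w') (w' i) := by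
    refine Submodule.span_le.2 ?_
    rintro _ ⟨j, hj, rfl⟩
    exact Module.End.mem_eigenspace_iff.2 (by rw [diagonalOp_basis, hw j i hj])
  rw [Module.End.mul_apply, Module.End.mul_apply, diagonalOp_basis, map_smul]
  exact (Module.End.mem_eigenspace_iff.1 (heigen (mem_span_of_commute_diagonalOp hD i))).symm

end DiagonalOperator

section LeibnizRule

variable {K M : Type*} [CommRing K] [AddCommGroup M] [Module K M]

/-- The Leibniz rule `D[x,y] = [Dx,y] + [x,Dy]` for the bilinear bracket `B`. -/
def IsLeibniz (B : M →ₗ[K] M →ₗ[K] M) (D : Module.End K M) : Prop :=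
  ∀ x y, D (B x y) = B (D x) y + B x (D y)

variable {B : M →ₗ[K] M →ₗ[K] M} {D D' : Module.End K M}

lemma IsLeibniz.add (hD : IsLeibniz B D)
    (hD' : IsLeibniz B D') : IsLeibniz B (D + D') := fun x y => by
  simp only [LinearMap.add_apply, map_add, hD x y, hD' x y]
  abel

lemma IsLeibniz.apply_of_eigenvectors (hD : IsLeibniz B D) {x y : M} {p q : K}
    (hx : D x = p • x) (hy : D y = q • y) : D (B x y) = (p + q) • B x y := by
  rw [hD, hx, hy, map_smul, LinearMap.smul_apply, map_smul, add_smul]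

lemma IsLeibniz.apply_of_apply_left_eq_zero (hD : IsLeibniz B D) {x : M} (hx : D x = 0) (y : M) :
    D (B x y) = B x (D y) := by
  rw [hD, hx, map_zero, LinearMap.zero_apply, zero_add]

end LeibnizRule

section WeightDerivation

variable {ι K M : Type*} [Field K] [AddCommGroup M] [Module K M]

/- The correction removes the part of `D T` of nonzero weight (the convention `0⁻¹ = 0` leaves the
zero weight alone). What remains, `z`, has weight zero, so `[D', ad T] = ad z` is diagonal; but the
commutator of any operator with the diagonal `ad T` has zero diagonal entries. -/
theorem commute_add_inner_of_diagonal (b : Module.Basis ι K M) {B : M →ₗ[K] M →ₗ[K] M} {T : M}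
    {w : ι → K} (hT : B T = diagonalOp b w) (hjacobi : IsLeibniz B (B T))
    (hcentralizer : ∀ z, B T z = 0 → ∃ c, B z = diagonalOp b c)
    {D : Module.End K M} (hD : ∀ x, D (B T x) = B (D T) x + B T (D x)) :
    Commute (D + B (diagonalOp b w⁻¹ (D T))) (diagonalOp b w) := by
  set u := diagonalOp b w⁻¹ (D T) with hu
  have hz : B T (D T - B T u) = 0 := by
    refine b.ext_elem fun i => ?_
    rw [hT, map_sub, map_sub, Finsupp.sub_apply]
    simp only [repr_diagonalOp, hu, Pi.inv_apply, map_zero, Finsupp.zero_apply]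
    by_cases hi : w i = 0
    · simp [hi]
    · field_simp
      ring
  have hcomm (x : M) : (D + B u) (B T x) - B T ((D + B u) x) = B (D T - B T u) x := by
    simp only [LinearMap.add_apply, hD, map_add, map_sub, LinearMap.sub_apply, hjacobi u x]
    abel
  obtain ⟨c, hc⟩ := hcentralizer _ hz
  have hc0 : c = 0 := by
    funext i
    have h := congrArg (fun v => b.repr v i) (hcomm (b i))
    rw [hc, hT] at h
    simpa [repr_diagonalOp] using h.symm
  refine b.ext fun i => sub_eq_zero.1 ?_
  have h := hcomm (b i)
  rwa [hc, hc0, hT, diagonalOp_basis b 0, Pi.zero_apply, zero_smul] at h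

end WeightDerivation

/-! ### The basis and the multiplication table of `S'(2,α)` -/

section LaurentCoordinates

lemma tshift_apply (k : ℤ) (u : Lau) (j : ℤ) : tshift k u j = u (j - k) := by
  conv_lhs => rw [← sub_add_cancel j k]
  exact Finsupp.mapDomain_apply (add_left_injective k) u (j - k)

lemma tder_apply (u : Lau) (j : ℤ) : tder u j = ((j : ℂ) + 1) * u (j + 1) := by
  induction u using Finsupp.induction_linear with
  | zero => simp
  | add f g hf hg => simp [hf, hg, mul_add]
  | single n c =>
    by_cases hn : n = j + 1
    · subst hn; simp [tder]
    · have hn' : n - 1 ≠ j := by omega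
      simp [tder, hn, hn']

variable (α : ℂ) (n : ℤ) (u₀ u₁ u₂ u₃ : Lau)

lemma Mt_apply :
    Mt n (u₀, u₁, u₂, u₃) = (tshift n u₀, tshift n u₁, tshift n u₂, tshift n u₃) := rfl

lemma Dt_apply : Dt (u₀, u₁, u₂, u₃) = (tder u₀, tder u₁, tder u₂, tder u₃) := rfl

lemma Mθ1_apply : Mθ1 (u₀, u₁, u₂, u₃) = (0, u₀, 0, u₂) := rfl

lemma Mθ2_apply : Mθ2 (u₀, u₁, u₂, u₃) = (0, 0, u₀, -u₁) := rfl

lemma Dθ1_apply : Dθ1 (u₀, u₁, u₂, u₃) = (u₁, 0, u₃, 0) := rfl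

lemma Dθ2_apply : Dθ2 (u₀, u₁, u₂, u₃) = (u₂, -u₃, 0, 0) := rfl

lemma sigmaGA_apply : sigmaGA (u₀, u₁, u₂, u₃) = (u₀, -u₁, -u₂, u₃) := rfl

lemma Lop_apply : Lop α n (u₀, u₁, u₂, u₃) =
    (-tshift (n + 1) (tder u₀),
      -tshift (n + 1) (tder u₁) - ((n + α + 1) / 2) • tshift n u₁,
      -tshift (n + 1) (tder u₂) - ((n + α + 1) / 2) • tshift n u₂,
      -tshift (n + 1) (tder u₃) - (n + α + 1) • tshift n u₃) := by
  simp only [Lop, LinearMap.neg_apply, LinearMap.add_apply, LinearMap.smul_apply,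
    Module.End.mul_apply, Mt_apply, Dt_apply, Mθ1_apply, Mθ2_apply, Dθ1_apply, Dθ2_apply,
    Prod.mk_add_mk, Prod.smul_mk, Prod.neg_mk, Prod.mk.injEq, map_zero, map_neg, map_add]
  refine ⟨?_, ?_, ?_, ?_⟩ <;> module

lemma Eop_apply : Eop n (u₀, u₁, u₂, u₃) = (0, 0, tshift n u₁, 0) := by
  simp [Eop, Mt_apply, Mθ2_apply, Dθ1_apply]

lemma Hop_apply : Hop n (u₀, u₁, u₂, u₃) = (0, -tshift n u₁, tshift n u₂, 0) := by
  simp [Hop, Mt_apply, Mθ1_apply, Mθ2_apply, Dθ1_apply, Dθ2_apply]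

lemma Fop_apply : Fop n (u₀, u₁, u₂, u₃) = (0, tshift n u₂, 0, 0) := by
  simp [Fop, Mt_apply, Mθ1_apply, Dθ2_apply]

lemma xop_apply : xop n (u₀, u₁, u₂, u₃) = (tshift (n + 1) u₁, 0, tshift (n + 1) u₃, 0) := by
  simp [xop, Mt_apply, Dθ1_apply]

lemma pop_apply : pop n (u₀, u₁, u₂, u₃) = (-tshift (n + 1) u₂, tshift (n + 1) u₃, 0, 0) := by
  simp [pop, Mt_apply, Dθ2_apply]

lemma hop_apply : hop α n (u₀, u₁, u₂, u₃) =
    (0, 0, tshift n (tder u₀), -tshift n (tder u₁) - (n + α) • tshift (n - 1) u₁) := by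
  simp [hop, Mt_apply, Dt_apply, Mθ1_apply, Mθ2_apply, Dθ1_apply]

lemma yop_apply : yop α n (u₀, u₁, u₂, u₃) =
    (0, tshift n (tder u₀), 0, tshift n (tder u₂) + (n + α) • tshift (n - 1) u₂) := by
  simp [yop, Mt_apply, Dt_apply, Mθ1_apply, Mθ2_apply, Dθ2_apply]

lemma sigmaGA_mul_self : sigmaGA * sigmaGA = 1 :=
  LinearMap.ext fun ⟨u₀, u₁, u₂, u₃⟩ => by simp [sigmaGA_apply]

end LaurentCoordinates

lemma sbr_eq_superCommutator (x y : Module.End ℂ GA) : sbr x y = superCommutator ℂ sigmaGA x y :=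
  rfl

lemma sbr_zero_left (y : Module.End ℂ GA) : sbr 0 y = 0 := by
  rw [sbr_eq_superCommutator, map_zero, LinearMap.zero_apply]

namespace s2Span

/-- The eight families of basis vectors of `S'(2,α)`, each of them indexed by `ℤ`. -/
inductive Kind | L | E | H | F | 𝔥 | 𝔶 | 𝔵 | 𝔭
  deriving DecidableEq

open Kind

/-- The sign `(−1)^p` of the basis vectors of a given kind. -/
def sign : Kind → ℂ
  | L | E | H | F => 1
  | 𝔥 | 𝔶 | 𝔵 | 𝔭 => -1

/-- The basis vector of `S'(2,α)` of the given kind and index, as an operator on `A`. -/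
def gen (α : ℂ) : Kind × ℤ → Module.End ℂ GA
  | (L, n) => Lop α n
  | (E, n) => Eop n
  | (H, n) => Hop n
  | (F, n) => Fop n
  | (𝔥, n) => hop α n
  | (𝔶, n) => yop α n
  | (𝔵, n) => xop n
  | (𝔭, n) => pop n

lemma range_gen (α : ℂ) : Set.range (gen α) = s2Gen α := by
  ext X
  constructor
  · rintro ⟨⟨k, n⟩, rfl⟩
    exact ⟨n, by cases k <;> simp [gen]⟩
  · rintro ⟨n, rfl | rfl | rfl | rfl | rfl | rfl | rfl | rfl⟩
    exacts [⟨(L, n), rfl⟩, ⟨(E, n), rfl⟩, ⟨(H, n), rfl⟩, ⟨(F, n), rfl⟩, ⟨(𝔥, n), rfl⟩,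
      ⟨(𝔭, n), rfl⟩, ⟨(𝔵, n), rfl⟩, ⟨(𝔶, n), rfl⟩]

lemma span_range_gen (α : ℂ) : Submodule.span ℂ (Set.range (gen α)) = s2Span α := by
  rw [range_gen, s2Span]

lemma conj_gen (α : ℂ) (i : Kind × ℤ) :
    sigmaGA * gen α i * sigmaGA = sign i.1 • gen α i := by
  obtain ⟨k, n⟩ := i
  refine LinearMap.ext fun ⟨u₀, u₁, u₂, u₃⟩ => ?_
  cases k <;>
    simp [gen, sign, sigmaGA_apply, Lop_apply, Eop_apply, Fop_apply, Hop_apply, xop_apply,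
      pop_apply, hop_apply, yop_apply, sub_eq_add_neg, add_comm]

/-- The functional `X ↦ (P (X v))ⱼ` on operators, reading off a single coefficient. -/
def matrixCoeff (v : GA) (P : GA →ₗ[ℂ] Lau) (j : ℤ) : Module.Dual ℂ (Module.End ℂ GA) :=
  Finsupp.lapply j ∘ₗ P ∘ₗ LinearMap.applyₗ v

lemma matrixCoeff_apply (v : GA) (P : GA →ₗ[ℂ] Lau) (j : ℤ) (X : Module.End ℂ GA) :
    matrixCoeff v P j X = P (X v) j := rfl

/-- Functionals on `End A` biorthogonal to the operators `gen α`: a derivation in `S'(2,α)` is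
determined by its values on `t`, `θ₁` and `θ₂`. -/
def dualGen (α : ℂ) : Kind × ℤ → Module.Dual ℂ (Module.End ℂ GA)
  | (L, n) => -matrixCoeff (Finsupp.single 1 1, 0, 0, 0) pr0 (n + 1)
  | (𝔥, n) => matrixCoeff (Finsupp.single 1 1, 0, 0, 0) pr2 n
  | (𝔶, n) => matrixCoeff (Finsupp.single 1 1, 0, 0, 0) pr1 n
  | (E, n) => matrixCoeff (0, Finsupp.single 0 1, 0, 0) pr2 n
  | (F, n) => matrixCoeff (0, 0, Finsupp.single 0 1, 0) pr1 n
  | (𝔵, n) => matrixCoeff (0, Finsupp.single 0 1, 0, 0) pr0 (n + 1)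
  | (𝔭, n) => -matrixCoeff (0, 0, Finsupp.single 0 1, 0) pr0 (n + 1)
  | (H, n) => -matrixCoeff (0, Finsupp.single 0 1, 0, 0) pr1 n
      + ((n + α + 1) / 2) • matrixCoeff (Finsupp.single 1 1, 0, 0, 0) pr0 (n + 1)

lemma dualGen_gen (α : ℂ) (k l : Kind) (n m : ℤ) :
    dualGen α (k, n) (gen α (l, m)) = if k = l ∧ n = m then 1 else 0 := by
  have index_zero (i j : ℤ) : 0 = i - j ↔ i = j := by omega
  have index_succ (i j : ℤ) : 0 = i - (j + 1) + 1 ↔ i = j := by omega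
  have index_one (i j : ℤ) : 1 = i - j + 1 ↔ i = j := by omega
  cases k <;> cases l <;>
    simp [dualGen, gen, matrixCoeff_apply, Lop_apply, Eop_apply, Fop_apply, Hop_apply, xop_apply,
      pop_apply, hop_apply, yop_apply, pr0, pr1, pr2, tshift_apply, tder_apply,
      Finsupp.single_apply, index_zero, index_succ, index_one] <;>
    by_cases h : n = m <;> simp [h]

lemma linearIndependent_gen (α : ℂ) : LinearIndependent ℂ (gen α) :=
  LinearIndependent.of_pairwise_dual_eq_zero_one (gen α) (dualGen α)
    (fun _ _ hij => (dualGen_gen ..).trans (if_neg fun h => hij (Prod.ext h.1 h.2)))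
    fun _ => (dualGen_gen ..).trans (if_pos ⟨rfl, rfl⟩)

/-- The basis of `S'(2,α)` formed by the operators `gen α`. -/
def basis (α : ℂ) : Module.Basis (Kind × ℤ) ℂ (s2Span α) :=
  (Module.Basis.span (linearIndependent_gen α)).map
    (LinearEquiv.ofEq _ _ (span_range_gen α))

lemma coe_basis (α : ℂ) (i : Kind × ℤ) : (basis α i : Module.End ℂ GA) = gen α i := by
  rw [basis, Module.Basis.map_apply, LinearEquiv.coe_ofEq_apply, Module.Basis.span_apply]

-- needed to find the additive group structure on `Module.End ℂ (s2Span α)`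
set_option maxSynthPendingDepth 3

/-- The structure constants of the action of `ℒ_n`, in the form
`[ℒ_n, k_m] = (virasoroCoeff α k n − m) k_{n+m}`. -/
def virasoroCoeff (α : ℂ) : Kind → ℤ → ℂ
  | L, n => n
  | E, _ | H, _ | F, _ => 0
  | 𝔥, n | 𝔶, n => (n + 1 - α) / 2
  | 𝔵, n | 𝔭, n => (n - 1 + α) / 2

/-- The eigenvalue of `ad H_0` on the basis vectors of a given kind. -/
def charge : Kind → ℤ
  | L | H => 0
  | E => 2
  | F => -2
  | 𝔥 | 𝔵 => 1
  | 𝔶 | 𝔭 => -1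

/-- The multiplication table of `S'(2,α)`: the bracket of the basis vectors `(k, n)` and
`(l, m)`. -/
def bracketTable (α : ℂ) : Kind → ℤ → Kind → ℤ → s2Span α
  | L, n, k, m => (virasoroCoeff α k n - m) • basis α (k, n + m)
  | k, n, L, m => (n - virasoroCoeff α k m) • basis α (k, n + m)
  | H, n, k, m => (charge k : ℂ) • basis α (k, n + m)
  | k, n, H, m => -(charge k : ℂ) • basis α (k, n + m)
  | E, n, F, m => basis α (H, n + m)
  | F, n, E, m => -basis α (H, n + m)
  | E, n, 𝔶, m => basis α (𝔥, n + m)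
  | 𝔶, n, E, m => -basis α (𝔥, n + m)
  | E, n, 𝔭, m => basis α (𝔵, n + m)
  | 𝔭, n, E, m => -basis α (𝔵, n + m)
  | F, n, 𝔥, m => basis α (𝔶, n + m)
  | 𝔥, n, F, m => -basis α (𝔶, n + m)
  | F, n, 𝔵, m => basis α (𝔭, n + m)
  | 𝔵, n, F, m => -basis α (𝔭, n + m)
  | 𝔵, n, 𝔥, m => (n - m + 1 - α) • basis α (E, n + m)
  | 𝔥, n, 𝔵, m => (m - n + 1 - α) • basis α (E, n + m)
  | 𝔭, n, 𝔶, m => (m - n - 1 + α) • basis α (F, n + m)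
  | 𝔶, n, 𝔭, m => (n - m - 1 + α) • basis α (F, n + m)
  | 𝔵, n, 𝔶, m => ((m - n - 1 + α) / 2) • basis α (H, n + m) - basis α (L, n + m)
  | 𝔶, n, 𝔵, m => ((n - m - 1 + α) / 2) • basis α (H, n + m) - basis α (L, n + m)
  | 𝔭, n, 𝔥, m => ((m - n - 1 + α) / 2) • basis α (H, n + m) + basis α (L, n + m)
  | 𝔥, n, 𝔭, m => ((n - m - 1 + α) / 2) • basis α (H, n + m) + basis α (L, n + m)
  | _, _, _, _ => 0

set_option maxHeartbeats 4000000 in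
-- sixty-four pairs of kinds, with four components each
lemma sbr_gen (α : ℂ) (k l : Kind) (n m : ℤ) :
    sbr (gen α (k, n)) (gen α (l, m)) = bracketTable α k n l m := by
  rw [sbr_eq_superCommutator,
    superCommutator_of_conj_eq_smul (conj_gen α (k, n)) (conj_gen α (l, m))]
  refine LinearMap.ext fun ⟨u₀, u₁, u₂, u₃⟩ => ?_
  cases k <;> cases l <;>
    simp only [bracketTable, virasoroCoeff, charge, sign, gen, coe_basis, Submodule.coe_add,
      Submodule.coe_sub, Submodule.coe_neg, Submodule.coe_smul, Submodule.coe_zero,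
      LinearMap.sub_apply, LinearMap.add_apply, LinearMap.neg_apply, LinearMap.smul_apply,
      LinearMap.zero_apply, Module.End.mul_apply, Lop_apply, Eop_apply, Fop_apply, Hop_apply,
      xop_apply, pop_apply, hop_apply, yop_apply, Prod.smul_mk, Prod.mk_add_mk, Prod.mk_sub_mk,
      Prod.neg_mk, Prod.mk.injEq, Prod.mk_eq_zero] <;>
    refine ⟨?_, ?_, ?_, ?_⟩ <;>
    ext j <;>
    simp only [Finsupp.add_apply, Finsupp.sub_apply, Finsupp.neg_apply, Finsupp.smul_apply,
      Finsupp.zero_apply, tshift_apply, tder_apply, map_zero, smul_eq_mul, Int.cast_add,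
      Int.cast_sub, Int.cast_neg, Int.cast_one, Int.cast_zero, Int.cast_ofNat] <;>
    ring_nf

variable {α : ℂ}

variable (α) in
/-- The superbracket of `S'(2,α)`. -/
def bracket : s2Span α →ₗ[ℂ] s2Span α →ₗ[ℂ] s2Span α :=
  (basis α).constr ℂ fun i => (basis α).constr ℂ fun j => bracketTable α i.1 i.2 j.1 j.2

lemma bracket_basis (k l : Kind) (n m : ℤ) :
    bracket α (basis α (k, n)) (basis α (l, m)) = bracketTable α k n l m := by
  simp only [bracket, Module.Basis.constr_basis]

lemma coe_bracket (x y : s2Span α) : (bracket α x y : Module.End ℂ GA) = sbr x y := by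
  have : (bracket α).compr₂ (s2Span α).subtype =
      (superCommutator ℂ sigmaGA).compl₁₂ (s2Span α).subtype (s2Span α).subtype := by
    refine LinearMap.ext_basis (basis α) (basis α) fun ⟨k, n⟩ ⟨l, m⟩ => ?_
    rw [LinearMap.compr₂_apply, bracket_basis, Submodule.subtype_apply, ← sbr_gen,
      LinearMap.compl₁₂_apply, Submodule.subtype_apply, Submodule.subtype_apply, coe_basis,
      coe_basis, sbr_eq_superCommutator]
  exact LinearMap.congr_fun₂ this x y

variable (α) in
/-- The parity automorphism of `S'(2,α)`. -/
def parity : Module.End ℂ (s2Span α) := diagonalOp (basis α) fun i => sign i.1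

lemma coe_parity (x : s2Span α) :
    (parity α x : Module.End ℂ GA) = sigmaGA * x * sigmaGA := by
  have : (s2Span α).subtype ∘ₗ parity α =
      LinearMap.mulRight ℂ sigmaGA ∘ₗ LinearMap.mulLeft ℂ sigmaGA ∘ₗ (s2Span α).subtype := by
    refine (basis α).ext fun i => ?_
    rw [LinearMap.comp_apply, parity, diagonalOp_basis, map_smul, Submodule.subtype_apply,
      coe_basis, ← conj_gen, ← coe_basis]
    rfl
  exact LinearMap.congr_fun this x

lemma parity_bracket (x y : s2Span α) :
    parity α (bracket α x y) = bracket α (parity α x) (parity α y) :=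
  Subtype.ext <| by
    simp only [coe_parity, coe_bracket, sbr_eq_superCommutator,
      superCommutator_conj sigmaGA_mul_self]

lemma isLeibniz_bracket {u : s2Span α} (hu : parity α u = u) :
    IsLeibniz (bracket α) (bracket α u) := fun x y => by
  have hu' : sigmaGA * u * sigmaGA = (u : Module.End ℂ GA) := by rw [← coe_parity, hu]
  apply Subtype.ext
  simp only [Submodule.coe_add, coe_bracket, sbr_eq_superCommutator,
    superCommutator_leibniz_of_even sigmaGA_mul_self hu']

lemma bracket_skew_of_even {u : s2Span α} (hu : parity α u = u) (y : s2Span α) :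
    bracket α y u = -bracket α u y := by
  have hu' : sigmaGA * u * sigmaGA = (u : Module.End ℂ GA) := by rw [← coe_parity, hu]
  apply Subtype.ext
  simp only [Submodule.coe_neg, coe_bracket, sbr_eq_superCommutator,
    superCommutator_skew_of_even hu']

lemma isEvenDer_iff {D : Module.End ℂ (s2Span α)} :
    IsEvenDer α D ↔ Commute D (parity α) ∧ IsLeibniz (bracket α) D := by
  refine and_congr ⟨fun h => LinearMap.ext fun x => Subtype.ext ?_, fun h x z hz => ?_⟩
    ⟨fun h x y => Subtype.ext ?_, fun h x y z hz => ?_⟩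
  · simpa only [Module.End.mul_apply, coe_parity] using h x _ (coe_parity x)
  · obtain rfl : z = parity α x := Subtype.ext (hz.trans (coe_parity x).symm)
    rw [← Module.End.mul_apply, h.eq, Module.End.mul_apply, coe_parity]
  · simpa only [Submodule.coe_add, coe_bracket] using h x y _ (coe_bracket x y)
  · obtain rfl : z = bracket α x y := Subtype.ext (hz.trans (coe_bracket x y).symm)
    rw [h x y, Submodule.coe_add, coe_bracket, coe_bracket]

lemma parity_apply_of_isOddDer {D : Module.End ℂ (s2Span α)} (hD : IsOddDer α D) (x : s2Span α) :
    D (parity α x) = -parity α (D x) :=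
  Subtype.ext <| by
    simpa only [Submodule.coe_neg, coe_parity] using hD.1 x _ (coe_parity x)

lemma bracket_apply_of_isOddDer {D : Module.End ℂ (s2Span α)} (hD : IsOddDer α D)
    (x y : s2Span α) :
    D (bracket α x y) = bracket α (D x) y + bracket α (parity α x) (D y) :=
  Subtype.ext <| by
    simpa only [Submodule.coe_add, coe_bracket, coe_parity] using hD.2 x y _ (coe_bracket x y)

/-! ### The weights of `ℒ_0 + √-1 H_0` -/

open Complex

variable {a : ℤ}

variable (α) in
/-- The element `Pℒ_0 + QH_0` of the Cartan subalgebra of `S'(2,α)`. -/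
def cartan (P Q : ℂ) : s2Span α := P • basis α (L, 0) + Q • basis α (H, 0)

variable (α) in
/-- The eigenvalues of `ad (Pℒ_0 + QH_0)` on the basis of `S'(2,α)`. -/
def cartanWeight (P Q : ℂ) (i : Kind × ℤ) : ℂ :=
  P * (virasoroCoeff α i.1 0 - i.2) + Q * charge i.1

lemma parity_cartan (P Q : ℂ) : parity α (cartan α P Q) = cartan α P Q := by
  simp [parity, cartan, sign]

lemma bracket_cartan (P Q : ℂ) :
    bracket α (cartan α P Q) = diagonalOp (basis α) (cartanWeight α P Q) := by
  refine (basis α).ext fun ⟨k, n⟩ => ?_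
  rw [cartan, map_add, map_smul, map_smul, LinearMap.add_apply, LinearMap.smul_apply,
    LinearMap.smul_apply, bracket_basis, bracket_basis, diagonalOp_basis]
  cases k <;> simp only [bracketTable, cartanWeight, virasoroCoeff, charge, zero_add] <;> module

lemma cartanWeight_eq_iff (i j : Kind × ℤ) :
    cartanWeight a 1 I i = cartanWeight a 1 I j ↔
      charge i.1 = charge j.1 ∧
        virasoroCoeff a i.1 0 - i.2 = virasoroCoeff a j.1 0 - j.2 := by
  have him (k : Kind) : (virasoroCoeff a k 0).im = 0 := by cases k <;> simp [virasoroCoeff]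
  constructor
  · intro h
    have hcharge : charge i.1 = charge j.1 := by
      simpa [cartanWeight, him] using congrArg Complex.im h
    refine ⟨hcharge, ?_⟩
    simpa [cartanWeight, hcharge] using h
  · rintro ⟨hcharge, h⟩
    rw [cartanWeight, cartanWeight, hcharge, h]

lemma sign_eq_of_charge_eq {k l : Kind} (h : charge k = charge l) : sign k = sign l := by
  cases k <;> cases l <;> simp_all [charge, sign]

lemma parity_diagonalOp (w : Kind × ℤ → ℂ) (x : s2Span α) :
    parity α (diagonalOp (basis α) w x) = diagonalOp (basis α) w (parity α x) := by
  rw [parity, ← Module.End.mul_apply, (commute_diagonalOp ..).eq, Module.End.mul_apply]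

lemma parity_parity (x : s2Span α) : parity α (parity α x) = x := by
  have : parity α * parity α = 1 := by
    refine (basis α).ext fun ⟨k, n⟩ => ?_
    rw [parity, diagonalOp_mul_diagonalOp, diagonalOp_basis, Module.End.one_apply]
    cases k <;> simp [sign]
  exact LinearMap.congr_fun this x

lemma commute_parity {D : Module.End ℂ (s2Span a)}
    (hD : Commute D (diagonalOp (basis a) (cartanWeight a 1 I))) : Commute D (parity a) :=
  commute_diagonalOp_of_commute
    (fun i j h => sign_eq_of_charge_eq ((cartanWeight_eq_iff i j).1 h).1) hD

variable (a) in
/-- The involution of the index set exchanging the two basis vectors that span a common weight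
space of `ad (ℒ_0 + √-1 H_0)`; it fixes the indices of `E_n` and `F_n`, whose weight spaces are
lines. -/
def partner : Kind × ℤ → Kind × ℤ
  | (L, n) => (H, n)
  | (H, n) => (L, n)
  | (E, n) => (E, n)
  | (F, n) => (F, n)
  | (𝔥, n) => (𝔵, n - 1 + a)
  | (𝔶, n) => (𝔭, n - 1 + a)
  | (𝔵, n) => (𝔥, n + 1 - a)
  | (𝔭, n) => (𝔶, n + 1 - a)

lemma cartanWeight_eq_iff_partner (i j : Kind × ℤ) :
    cartanWeight a 1 I j = cartanWeight a 1 I i ↔ j = i ∨ j = partner a i := by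
  have odd_weight_iff (n m : ℤ) :
      (-1 + a : ℂ) / 2 - m = (1 - a) / 2 - n ↔ m = n - 1 + a := by
    rw [← Int.cast_inj (α := ℂ), Int.cast_add, Int.cast_sub, Int.cast_one]
    constructor <;> intro h <;> linear_combination -h
  have odd_weight_iff' (n m : ℤ) :
      (1 - a : ℂ) / 2 - m = (-1 + a) / 2 - n ↔ m = n + 1 - a := by
    rw [eq_comm, odd_weight_iff]
    omega
  obtain ⟨k, n⟩ := i
  obtain ⟨l, m⟩ := j
  rw [cartanWeight_eq_iff]
  cases k <;> cases l <;> simp [charge, virasoroCoeff, partner, odd_weight_iff, odd_weight_iff']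

lemma exists_apply_basis_eq {D : Module.End ℂ (s2Span a)}
    (hD : Commute D (diagonalOp (basis a) (cartanWeight a 1 I))) (i : Kind × ℤ) :
    ∃ p q : ℂ, D (basis a i) = p • basis a i + q • basis a (partner a i) := by
  have hfiber : {j | cartanWeight a 1 I j = cartanWeight a 1 I i} = {i, partner a i} :=
    Set.ext (cartanWeight_eq_iff_partner i)
  have hmem := mem_span_of_commute_diagonalOp hD i
  rw [hfiber, Set.image_pair] at hmem
  obtain ⟨p, q, h⟩ := Submodule.mem_span_pair.1 hmem
  exact ⟨p, q, h.symm⟩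

lemma exists_eq_cartan {z : s2Span a} (hz : bracket a (cartan a 1 I) z = 0) :
    ∃ P Q, z = cartan a P Q := by
  have hfiber : {j | cartanWeight a 1 I j = 0} = {(L, 0), (H, 0)} := by
    have hL : cartanWeight a 1 I (L, 0) = 0 := by simp [cartanWeight, virasoroCoeff, charge]
    exact Set.ext fun j => hL ▸ cartanWeight_eq_iff_partner (L, 0) j
  rw [bracket_cartan, ← zero_smul ℂ z] at hz
  have hmem := mem_span_of_diagonalOp_eq_smul hz
  rw [hfiber, Set.image_pair] at hmem
  obtain ⟨P, Q, h⟩ := Submodule.mem_span_pair.1 hmem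
  exact ⟨P, Q, h.symm⟩

lemma commute_add_bracket {D : Module.End ℂ (s2Span a)}
    (hD : ∀ x, D (bracket a (cartan a 1 I) x) =
      bracket a (D (cartan a 1 I)) x + bracket a (cartan a 1 I) (D x)) :
    Commute (D + bracket a (diagonalOp (basis a) (cartanWeight a 1 I)⁻¹ (D (cartan a 1 I))))
      (diagonalOp (basis a) (cartanWeight a 1 I)) :=
  commute_add_inner_of_diagonal (basis a) (bracket_cartan 1 I)
    (isLeibniz_bracket (parity_cartan 1 I))
    (fun z hz => by
      obtain ⟨P, Q, rfl⟩ := exists_eq_cartan hz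
      exact ⟨_, bracket_cartan P Q⟩)
    hD

theorem isInnerDer_of_isOddDer {D : Module.End ℂ (s2Span a)} (hD : IsOddDer a D) :
    IsInnerDer a D := by
  set T := cartan (a : ℂ) 1 I
  set u := diagonalOp (basis a) (cartanWeight a 1 I)⁻¹ (D T) with hu_def
  have hu : parity a u = -u := by
    have hDT : parity a (D T) = -D T := by
      rw [← neg_eq_iff_eq_neg, ← parity_apply_of_isOddDer hD, parity_cartan]
    rw [hu_def, parity_diagonalOp, hDT, map_neg]
  have hcomm : Commute (D + bracket a u) (parity a) :=
    commute_parity <| commute_add_bracket fun x => by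
      rw [bracket_apply_of_isOddDer hD, parity_cartan]
  have : IsAddTorsionFree (s2Span (a : ℂ)) := .of_isTorsionFree ℂ _
  have hzero (x : s2Span a) : parity a ((D + bracket a u) x) = 0 := by
    have heven : (D + bracket a u) (parity a x) = parity a ((D + bracket a u) x) :=
      LinearMap.congr_fun hcomm.eq x
    have hodd : (D + bracket a u) (parity a x) = -parity a ((D + bracket a u) x) := by
      rw [LinearMap.add_apply, LinearMap.add_apply, map_add, parity_bracket, hu,
        parity_apply_of_isOddDer hD, map_neg, LinearMap.neg_apply, neg_add, neg_neg]
    exact self_eq_neg.1 (heven.symm.trans hodd)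
  refine ⟨-u, fun x => ?_⟩
  have hx : D x + bracket a u x = 0 := by
    rw [← LinearMap.add_apply, ← parity_parity ((D + bracket a u) x), hzero, map_zero]
  rw [eq_neg_of_add_eq_zero_left hx, ← coe_bracket, map_neg, LinearMap.neg_apply]

/-! ### The outer derivations -/

variable (a) in
/-- The outer derivation `cE𝖤 + cH𝖧 + cF𝖥` of `S'(2,a)`: each pair of odd basis vectors exchanged
by `partner` spans a copy of the standard representation of `𝔰𝔩(2)`. -/
def outerDer (cE cH cF : ℂ) : Module.End ℂ (s2Span a) :=
  (basis a).constr ℂ fun i =>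
    match i.1 with
    | L | E | H | F => 0
    | 𝔥 | 𝔶 => -cH • basis a i + cE • basis a (partner a i)
    | 𝔵 | 𝔭 => cH • basis a i + cF • basis a (partner a i)

lemma outerDer_basis (cE cH cF : ℂ) (k : Kind) (n : ℤ) :
    outerDer a cE cH cF (basis a (k, n)) =
      match k with
      | L | E | H | F => 0
      | 𝔥 => -cH • basis a (𝔥, n) + cE • basis a (𝔵, n - 1 + a)
      | 𝔶 => -cH • basis a (𝔶, n) + cE • basis a (𝔭, n - 1 + a)
      | 𝔵 => cH • basis a (𝔵, n) + cF • basis a (𝔥, n + 1 - a)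
      | 𝔭 => cH • basis a (𝔭, n) + cF • basis a (𝔶, n + 1 - a) := by
  rw [outerDer, Module.Basis.constr_basis]
  cases k <;> rfl

lemma outerDer_eq_smul_add (cE cH cF : ℂ) :
    outerDer a cE cH cF =
      cE • outerDer a 1 0 0 + cH • outerDer a 0 1 0 + cF • outerDer a 0 0 1 := by
  refine (basis (a : ℂ)).ext fun ⟨k, n⟩ => ?_
  simp only [LinearMap.add_apply, LinearMap.smul_apply, outerDer_basis]
  cases k <;> module

lemma outerDer_lie_outerDer (cE cH cF cE' cH' cF' : ℂ) :
    ⁅outerDer a cE cH cF, outerDer a cE' cH' cF'⁆ =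
      outerDer a (2 * (cH * cE' - cE * cH')) (cE * cF' - cF * cE') (2 * (cF * cH' - cH * cF')) := by
  refine (basis (a : ℂ)).ext fun ⟨k, n⟩ => ?_
  have hdown : n - 1 + a + 1 - a = n := by ring
  have hup : n + 1 - a - 1 + a = n := by ring
  cases k <;>
    simp only [LieRing.of_associative_ring_bracket, LinearMap.sub_apply, Module.End.mul_apply,
      outerDer_basis, map_add, map_smul, map_zero, hdown, hup] <;>
    module

lemma commute_outerDer_parity (cE cH cF : ℂ) : Commute (outerDer a cE cH cF) (parity a) := by
  refine (basis (a : ℂ)).ext fun ⟨k, n⟩ => ?_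
  cases k <;>
    simp only [Module.End.mul_apply, parity, diagonalOp_basis, outerDer_basis, map_add, map_smul,
      map_zero, sign] <;>
    module

set_option maxHeartbeats 1000000 in
-- sixty-four pairs of kinds
lemma isLeibniz_outerDer (cE cH cF : ℂ) : IsLeibniz (bracket a) (outerDer a cE cH cF) := by
  have : (bracket (a : ℂ)).compr₂ (outerDer a cE cH cF) =
      (bracket (a : ℂ)).compl₁₂ (outerDer a cE cH cF) LinearMap.id +
        (bracket (a : ℂ)).compl₁₂ LinearMap.id (outerDer a cE cH cF) := by
    refine LinearMap.ext_basis (basis (a : ℂ)) (basis (a : ℂ)) fun ⟨k, n⟩ ⟨l, m⟩ => ?_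
    simp only [LinearMap.compr₂_apply, LinearMap.compl₁₂_apply, LinearMap.add_apply,
      LinearMap.id_apply, bracket_basis]
    have down_right : n + (m - 1 + a) = n + m - 1 + a := by ring
    have down_left : n - 1 + a + m = n + m - 1 + a := by ring
    have up_right : n + (m + 1 - a) = n + m + 1 - a := by ring
    have up_left : n + 1 - a + m = n + m + 1 - a := by ring
    cases k <;> cases l <;>
      simp only [bracketTable, virasoroCoeff, charge, outerDer_basis, bracket_basis, map_add,
        map_sub, map_neg, map_smul, map_zero, LinearMap.add_apply, LinearMap.smul_apply,
        LinearMap.zero_apply, down_right, down_left, up_right, up_left, Int.cast_add,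
        Int.cast_sub, Int.cast_one] <;>
      module
  exact LinearMap.congr_fun₂ this

lemma isEvenDer_outerDer (cE cH cF : ℂ) : IsEvenDer a (outerDer a cE cH cF) :=
  isEvenDer_iff.2 ⟨commute_outerDer_parity cE cH cF, isLeibniz_outerDer cE cH cF⟩

lemma isInnerDer_iff {D : Module.End ℂ (s2Span α)} : IsInnerDer α D ↔ ∃ s, D = bracket α s := by
  refine exists_congr fun s => ?_
  simp only [LinearMap.ext_iff, Subtype.ext_iff, coe_bracket]

lemma basis_smul_cancel {i : Kind × ℤ} {p q : ℂ} (h : p • basis α i = q • basis α i) : p = q :=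
  smul_left_injective ℂ ((basis α).ne_zero i) h

lemma exists_linear_eigenvalues {D : Module.End ℂ (s2Span α)} (hD : IsLeibniz (bracket α) D)
    {e f : ℤ → ℂ} (hE : ∀ n, D (basis α (E, n)) = e n • basis α (E, n))
    (hF : ∀ n, D (basis α (F, n)) = f n • basis α (F, n)) :
    ∃ p q : ℂ, ∀ n : ℤ, e n = p * n + q ∧ f n = p * n - q := by
  have hH (n m : ℤ) : D (basis α (H, n + m)) = (e n + f m) • basis α (H, n + m) := by
    simpa only [bracket_basis, bracketTable] using hD.apply_of_eigenvectors (hE n) (hF m)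
  have hzero : e 0 + f 0 = 0 := by
    have h := hD.apply_of_eigenvectors (hH 0 0) (hE 0)
    have hHE : bracket α (basis α (H, 0 + 0)) (basis α (E, 0)) = (2 : ℂ) • basis α (E, 0) :=
      bracket_basis H E _ _
    rw [hHE, map_smul, hE, smul_smul, smul_smul] at h
    linear_combination -(1 / 2) * basis_smul_cancel h
  have hadd (n m : ℤ) : e n + f m = e (n + m) + f 0 :=
    basis_smul_cancel ((hH n m).symm.trans (by simpa only [add_zero] using hH (n + m) 0))
  have hf (m : ℤ) : f m = e m - 2 * e 0 := by
    have h := hadd 0 m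
    rw [zero_add] at h
    linear_combination h + hzero
  let g : ℤ →+ ℂ := AddMonoidHom.mk' (fun n => e n - e 0) fun n m => by
    linear_combination -hadd n m - hzero + hf m
  have hg (n : ℤ) : e n - e 0 = n * g 1 := by
    rw [← zsmul_eq_mul, ← map_zsmul, smul_eq_mul, mul_one]
    rfl
  exact ⟨g 1, e 0, fun n => ⟨by linear_combination hg n, by linear_combination hg n + hf n⟩⟩

lemma exists_cartan_correction {D : Module.End ℂ (s2Span a)} (hD : IsLeibniz (bracket a) D)
    (hweight : Commute D (diagonalOp (basis a) (cartanWeight a 1 I))) :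
    ∃ P Q, ∀ n, (D + bracket a (cartan a P Q)) (basis a (E, n)) = 0 ∧
      (D + bracket a (cartan a P Q)) (basis a (F, n)) = 0 := by
  have heigen (i : Kind × ℤ) (hi : partner a i = i) : ∃ c : ℂ, D (basis a i) = c • basis a i := by
    obtain ⟨p, q, h⟩ := exists_apply_basis_eq hweight i
    exact ⟨p + q, by rw [h, hi, add_smul]⟩
  choose e hE using fun n => heigen (E, n) rfl
  choose f hF using fun n => heigen (F, n) rfl
  obtain ⟨p, q, hpq⟩ := exists_linear_eigenvalues hD hE hF
  refine ⟨p, -q / 2, fun n => ?_⟩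
  rw [LinearMap.add_apply, LinearMap.add_apply, hE, hF, (hpq n).1, (hpq n).2, bracket_cartan,
    diagonalOp_basis, diagonalOp_basis]
  simp only [cartanWeight, virasoroCoeff, charge, Int.cast_neg, Int.cast_ofNat]
  constructor <;> module

lemma apply_H_eq_zero {D : Module.End ℂ (s2Span α)} (hD : IsLeibniz (bracket α) D)
    (hE : ∀ n, D (basis α (E, n)) = 0) (hF : ∀ n, D (basis α (F, n)) = 0) (n : ℤ) :
    D (basis α (H, n)) = 0 := by
  have h := hD.apply_of_apply_left_eq_zero (hE n) (basis α (F, 0))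
  rwa [hF, map_zero, bracket_basis, bracketTable, add_zero] at h

lemma apply_L_eq_zero {D : Module.End ℂ (s2Span a)} (hD : IsLeibniz (bracket a) D)
    (hweight : Commute D (diagonalOp (basis a) (cartanWeight a 1 I)))
    (hE : ∀ n, D (basis a (E, n)) = 0) (n : ℤ) : D (basis a (L, n)) = 0 := by
  obtain ⟨p, q, h : _ = p • _ + q • basis (a : ℂ) (H, n)⟩ := exists_apply_basis_eq hweight (L, n)
  have key (m : ℤ) : 2 * q - p * m = 0 := by
    have hLE := hD (basis a (L, n)) (basis a (E, m))
    simp only [h, hE, map_zero, add_zero, bracket_basis, bracketTable, virasoroCoeff, charge,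
      map_smul, smul_zero, map_add, LinearMap.add_apply, LinearMap.smul_apply] at hLE
    refine basis_smul_cancel (α := a) (i := (E, n + m)) ?_
    rw [zero_smul, hLE]
    push_cast
    module
  have hq : q = 0 := by simpa using key 0
  have hp : p = 0 := by simpa [hq] using key 1
  rw [h, hp, hq, zero_smul, zero_smul, add_zero]

theorem exists_eq_outerDer_of_sl_two_loop_eq_zero {D : Module.End ℂ (s2Span a)}
    (hD : IsLeibniz (bracket a) D)
    (hweight : Commute D (diagonalOp (basis a) (cartanWeight a 1 I)))
    (hE : ∀ n, D (basis a (E, n)) = 0) (hF : ∀ n, D (basis a (F, n)) = 0) :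
    ∃ cE cH cF, D = outerDer a cE cH cF := by
  obtain ⟨p, cE, h𝔶₀ : _ = p • _ + cE • basis (a : ℂ) (𝔭, 0 - 1 + a)⟩ :=
    exists_apply_basis_eq hweight (𝔶, 0)
  obtain ⟨cH, cF, h𝔭₀ : _ = cH • _ + cF • basis (a : ℂ) (𝔶, 0 + 1 - a)⟩ :=
    exists_apply_basis_eq hweight (𝔭, 0)
  have lower (n : ℤ) : n + (0 - 1 + a) = n - 1 + a := by ring
  have raise (n : ℤ) : n + (0 + 1 - a) = n + 1 - a := by ring
  have h𝔥 (n : ℤ) : D (basis a (𝔥, n)) = p • basis a (𝔥, n) + cE • basis a (𝔵, n - 1 + a) := by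
    simpa only [h𝔶₀, map_add, map_smul, bracket_basis, bracketTable, add_zero, lower] using
      hD.apply_of_apply_left_eq_zero (hE n) (basis a (𝔶, 0))
  have h𝔵 (n : ℤ) : D (basis a (𝔵, n)) = cH • basis a (𝔵, n) + cF • basis a (𝔥, n + 1 - a) := by
    simpa only [h𝔭₀, map_add, map_smul, bracket_basis, bracketTable, add_zero, raise] using
      hD.apply_of_apply_left_eq_zero (hE n) (basis a (𝔭, 0))
  have h𝔶 (n : ℤ) : D (basis a (𝔶, n)) = p • basis a (𝔶, n) + cE • basis a (𝔭, n - 1 + a) := by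
    simpa only [h𝔥, map_add, map_smul, bracket_basis, bracketTable, add_zero, lower] using
      hD.apply_of_apply_left_eq_zero (hF n) (basis a (𝔥, 0))
  have h𝔭 (n : ℤ) : D (basis a (𝔭, n)) = cH • basis a (𝔭, n) + cF • basis a (𝔶, n + 1 - a) := by
    simpa only [h𝔵, map_add, map_smul, bracket_basis, bracketTable, add_zero, raise] using
      hD.apply_of_apply_left_eq_zero (hF n) (basis a (𝔵, 0))
  have hp : p = -cH := by
    have h := hD (basis a (𝔵, 0)) (basis a (𝔶, 0))
    simp only [h𝔵, h𝔶, map_add, map_sub, map_smul, LinearMap.add_apply, LinearMap.smul_apply,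
      bracket_basis, bracketTable, add_zero, smul_zero, sub_zero, apply_H_eq_zero hD hE hF,
      apply_L_eq_zero hD hweight hE] at h
    have hL : 0 = -cH + -p := by simpa using congrArg (fun v => (basis (a : ℂ)).repr v (L, 0)) h
    linear_combination hL
  refine ⟨cE, cH, cF, (basis (a : ℂ)).ext fun ⟨k, n⟩ => ?_⟩
  rw [outerDer_basis, ← hp]
  cases k
  exacts [apply_L_eq_zero hD hweight hE n, hE n, apply_H_eq_zero hD hE hF n, hF n, h𝔥 n, h𝔶 n,
    h𝔵 n, h𝔭 n]

theorem exists_eq_outerDer_add_bracket {D : Module.End ℂ (s2Span a)} (hD : IsEvenDer a D) :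
    ∃ cE cH cF s, D = outerDer a cE cH cF + bracket a s := by
  obtain ⟨hparity, hleibniz⟩ := isEvenDer_iff.1 hD
  set T := cartan (a : ℂ) 1 I
  set u := diagonalOp (basis a) (cartanWeight a 1 I)⁻¹ (D T) with hu_def
  have hu : parity a u = u := by
    have hDT : parity a (D T) = D T := by
      rw [← Module.End.mul_apply, ← hparity.eq, Module.End.mul_apply, parity_cartan]
    rw [hu_def, parity_diagonalOp, hDT]
  have hweight := commute_add_bracket (hleibniz T)
  have hleibniz_u := hleibniz.add (isLeibniz_bracket hu)
  obtain ⟨P, Q, hPQ⟩ := exists_cartan_correction hleibniz_u hweight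
  have hcartan : Commute (bracket a (cartan a P Q))
      (diagonalOp (basis a) (cartanWeight a 1 I)) := by
    rw [bracket_cartan]
    exact commute_diagonalOp ..
  obtain ⟨cE, cH, cF, h⟩ := exists_eq_outerDer_of_sl_two_loop_eq_zero
    (hleibniz_u.add (isLeibniz_bracket (parity_cartan P Q))) (hweight.add_left hcartan)
    (fun n => (hPQ n).1) (fun n => (hPQ n).2)
  refine ⟨cE, cH, cF, -(u + cartan a P Q), ?_⟩
  rw [← h, map_neg, map_add]
  abel

theorem exists_eq_outerDer_add_bracket_of_isSuperDer {D : Module.End ℂ (s2Span a)}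
    (hD : IsSuperDer a D) : ∃ cE cH cF s, D = outerDer a cE cH cF + bracket a s := by
  obtain ⟨De, Do, rfl, hDe, hDo⟩ := hD
  obtain ⟨cE, cH, cF, s, rfl⟩ := exists_eq_outerDer_add_bracket hDe
  obtain ⟨s', rfl⟩ := isInnerDer_iff.1 (isInnerDer_of_isOddDer hDo)
  exact ⟨cE, cH, cF, s + s', by rw [map_add, add_assoc]⟩

theorem coeff_eq_zero_of_outerDer_eq_bracket {cE cH cF : ℂ} {s : s2Span a}
    (h : outerDer a cE cH cF = bracket a s) : cE = 0 ∧ cH = 0 ∧ cF = 0 := by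
  obtain ⟨P, Q, rfl⟩ : ∃ P Q, s = cartan a P Q := by
    refine exists_eq_cartan ?_
    rw [← neg_eq_zero, ← bracket_skew_of_even (parity_cartan 1 I), ← h, cartan]
    simp only [map_add, map_smul, outerDer_basis, smul_zero, add_zero]
  have hweight (n : ℤ) : cartanWeight a P Q (E, n) = 0 := by
    refine basis_smul_cancel (α := a) (i := (E, n)) ?_
    rw [← diagonalOp_basis, ← bracket_cartan, ← h, outerDer_basis, zero_smul]
  have hQ : Q = 0 := by simpa [cartanWeight, virasoroCoeff, charge] using hweight 0
  have hP : P = 0 := by simpa [cartanWeight, virasoroCoeff, charge, hQ] using hweight 1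
  have hzero : outerDer a cE cH cF = 0 := by
    rw [h, cartan, hP, hQ, zero_smul, zero_smul, add_zero, map_zero]
  have hcoeff (k l : Kind) (n m : ℤ) :
      (basis (a : ℂ)).repr (outerDer a cE cH cF (basis a (k, n))) (l, m) = 0 := by
    rw [hzero, LinearMap.zero_apply, map_zero, Finsupp.zero_apply]
  exact ⟨by simpa [outerDer_basis] using hcoeff 𝔥 𝔵 0 (0 - 1 + a),
    by simpa [outerDer_basis] using hcoeff 𝔵 𝔵 0 0,
    by simpa [outerDer_basis] using hcoeff 𝔵 𝔥 0 (0 + 1 - a)⟩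

lemma eq_basis_of_coe_eq {z : s2Span α} (i : Kind × ℤ) (hz : (z : Module.End ℂ GA) = gen α i) :
    z = basis α i :=
  Subtype.ext (hz.trans (coe_basis α i).symm)

lemma coe_outerDer (cE cH cF : ℂ) (x : s2Span a) :
    (outerDer a cE cH cF x : Module.End ℂ GA) =
      cE • (outerDer a 1 0 0 x : Module.End ℂ GA) + cH • (outerDer a 0 1 0 x : Module.End ℂ GA)
        + cF • (outerDer a 0 0 1 x : Module.End ℂ GA) := by
  rw [outerDer_eq_smul_add]
  rfl

lemma coe_outerDer_of_eq_hop {cE cH cF : ℂ} {k : ℤ} {z : s2Span a}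
    (hz : (z : Module.End ℂ GA) = hop a k) :
    (outerDer a cE cH cF z : Module.End ℂ GA) = cE • xop (k - 1 + a) + cH • -hop a k := by
  rw [eq_basis_of_coe_eq (𝔥, k) hz, outerDer_basis, Submodule.coe_add, Submodule.coe_smul,
    Submodule.coe_smul, coe_basis, coe_basis, neg_smul, ← smul_neg, add_comm]
  rfl

lemma coe_outerDer_of_eq_yop {cE cH cF : ℂ} {k : ℤ} {z : s2Span a}
    (hz : (z : Module.End ℂ GA) = yop a k) :
    (outerDer a cE cH cF z : Module.End ℂ GA) = cE • pop (k - 1 + a) + cH • -yop a k := by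
  rw [eq_basis_of_coe_eq (𝔶, k) hz, outerDer_basis, Submodule.coe_add, Submodule.coe_smul,
    Submodule.coe_smul, coe_basis, coe_basis, neg_smul, ← smul_neg, add_comm]
  rfl

lemma coe_outerDer_of_eq_xop {cE cH cF : ℂ} {k : ℤ} {z : s2Span a}
    (hz : (z : Module.End ℂ GA) = xop k) :
    (outerDer a cE cH cF z : Module.End ℂ GA) = cH • xop k + cF • hop a (k + 1 - a) := by
  rw [eq_basis_of_coe_eq (𝔵, k) hz, outerDer_basis, Submodule.coe_add, Submodule.coe_smul,
    Submodule.coe_smul, coe_basis, coe_basis]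
  rfl

lemma coe_outerDer_of_eq_pop {cE cH cF : ℂ} {k : ℤ} {z : s2Span a}
    (hz : (z : Module.End ℂ GA) = pop k) :
    (outerDer a cE cH cF z : Module.End ℂ GA) = cH • pop k + cF • yop a (k + 1 - a) := by
  rw [eq_basis_of_coe_eq (𝔭, k) hz, outerDer_basis, Submodule.coe_add, Submodule.coe_smul,
    Submodule.coe_smul, coe_basis, coe_basis]
  rfl

lemma outerDer_H_lie_E : ⁅outerDer a 0 1 0, outerDer a 1 0 0⁆ = (2 : ℂ) • outerDer a 1 0 0 := by
  rw [outerDer_lie_outerDer, outerDer_eq_smul_add]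
  module

lemma outerDer_H_lie_F : ⁅outerDer a 0 1 0, outerDer a 0 0 1⁆ = -((2 : ℂ) • outerDer a 0 0 1) := by
  rw [outerDer_lie_outerDer, outerDer_eq_smul_add]
  module

lemma outerDer_E_lie_F : ⁅outerDer a 1 0 0, outerDer a 0 0 1⁆ = outerDer a 0 1 0 := by
  rw [outerDer_lie_outerDer]
  norm_num

lemma coe_lie_apply (D D' : Module.End ℂ (s2Span α)) (x : s2Span α) :
    ((⁅D, D'⁆ x : s2Span α) : Module.End ℂ GA) =
      (D (D' x) : Module.End ℂ GA) - (D' (D x) : Module.End ℂ GA) := by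
  rw [LieRing.of_associative_ring_bracket, LinearMap.sub_apply, Module.End.mul_apply,
    Module.End.mul_apply, Submodule.coe_sub]

lemma coe_outerDer_H_lie_E (x : s2Span a) :
    (outerDer a 0 1 0 (outerDer a 1 0 0 x) : Module.End ℂ GA)
      - (outerDer a 1 0 0 (outerDer a 0 1 0 x) : Module.End ℂ GA)
      - (2 : ℂ) • (outerDer a 1 0 0 x : Module.End ℂ GA) = 0 := by
  rw [← coe_lie_apply, outerDer_H_lie_E, LinearMap.smul_apply, Submodule.coe_smul, sub_self]

lemma coe_outerDer_H_lie_F (x : s2Span a) :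
    (outerDer a 0 1 0 (outerDer a 0 0 1 x) : Module.End ℂ GA)
      - (outerDer a 0 0 1 (outerDer a 0 1 0 x) : Module.End ℂ GA)
      + (2 : ℂ) • (outerDer a 0 0 1 x : Module.End ℂ GA) = 0 := by
  rw [← coe_lie_apply, outerDer_H_lie_F, LinearMap.neg_apply, Submodule.coe_neg,
    LinearMap.smul_apply, Submodule.coe_smul, neg_add_cancel]

lemma coe_outerDer_E_lie_F (x : s2Span a) :
    (outerDer a 1 0 0 (outerDer a 0 0 1 x) : Module.End ℂ GA)
      - (outerDer a 0 0 1 (outerDer a 1 0 0 x) : Module.End ℂ GA)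
      - (outerDer a 0 1 0 x : Module.End ℂ GA) = 0 := by
  rw [← coe_lie_apply, outerDer_E_lie_F, sub_self]

end s2Span

open s2Span

/-- For `α ∈ ℤ`, the Lie superalgebra of exterior derivations
`Der_ext S'(2,α) = Der S'(2,α)/Inn S'(2,α)` is purely even and isomorphic to
`𝔰𝔩(2,ℂ)`: it is spanned by the classes of three even derivations `𝖤, 𝖧, 𝖥`
satisfying `[𝖧,𝖤] = 2𝖤`, `[𝖧,𝖥] = −2𝖥`, `[𝖤,𝖥] = 𝖧` modulo inner derivations,
acting on the odd basis elements by `𝖤(𝔥_k^α) = 𝔵_{k−1+α}`, `𝖤(𝔶_k^α) = 𝔭_{k−1+α}`,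
`𝖥(𝔵_k) = 𝔥_{k+1−α}^α`, `𝖥(𝔭_k) = 𝔶_{k+1−α}^α`, `𝖧(𝔵_k) = 𝔵_k`,
`𝖧(𝔥_k^α) = −𝔥_k^α`, `𝖧(𝔭_k) = 𝔭_k`, `𝖧(𝔶_k^α) = −𝔶_k^α`. -/
theorem exterior_derivations_integral_alpha (a : ℤ) :
    ∃ DE DH DF : ↥(s2Span (a : ℂ)) →ₗ[ℂ] ↥(s2Span (a : ℂ)),
      IsEvenDer (a : ℂ) DE ∧ IsEvenDer (a : ℂ) DH ∧ IsEvenDer (a : ℂ) DF ∧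
      -- the action (4.15) on the odd basis elements
      (∀ (k : ℤ) (z : ↥(s2Span (a : ℂ))), (z : Module.End ℂ GA) = hop (a : ℂ) k →
        ((DE z : Module.End ℂ GA)) = xop (k - 1 + a)) ∧
      (∀ (k : ℤ) (z : ↥(s2Span (a : ℂ))), (z : Module.End ℂ GA) = yop (a : ℂ) k →
        ((DE z : Module.End ℂ GA)) = pop (k - 1 + a)) ∧
      (∀ (k : ℤ) (z : ↥(s2Span (a : ℂ))), (z : Module.End ℂ GA) = xop k →
        ((DF z : Module.End ℂ GA)) = hop (a : ℂ) (k + 1 - a)) ∧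
      (∀ (k : ℤ) (z : ↥(s2Span (a : ℂ))), (z : Module.End ℂ GA) = pop k →
        ((DF z : Module.End ℂ GA)) = yop (a : ℂ) (k + 1 - a)) ∧
      (∀ (k : ℤ) (z : ↥(s2Span (a : ℂ))), (z : Module.End ℂ GA) = xop k →
        ((DH z : Module.End ℂ GA)) = xop k) ∧
      (∀ (k : ℤ) (z : ↥(s2Span (a : ℂ))), (z : Module.End ℂ GA) = hop (a : ℂ) k →
        ((DH z : Module.End ℂ GA)) = -hop (a : ℂ) k) ∧
      (∀ (k : ℤ) (z : ↥(s2Span (a : ℂ))), (z : Module.End ℂ GA) = pop k →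
        ((DH z : Module.End ℂ GA)) = pop k) ∧
      (∀ (k : ℤ) (z : ↥(s2Span (a : ℂ))), (z : Module.End ℂ GA) = yop (a : ℂ) k →
        ((DH z : Module.End ℂ GA)) = -yop (a : ℂ) k) ∧
      -- the classes satisfy the `𝔰𝔩(2)` relations modulo inner derivations
      (∃ s : ↥(s2Span (a : ℂ)), ∀ x : ↥(s2Span (a : ℂ)),
        ((DH (DE x) : Module.End ℂ GA)) - ((DE (DH x) : Module.End ℂ GA))
          - (2 : ℂ) • ((DE x : Module.End ℂ GA))
          = sbr (s : Module.End ℂ GA) (x : Module.End ℂ GA)) ∧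
      (∃ s : ↥(s2Span (a : ℂ)), ∀ x : ↥(s2Span (a : ℂ)),
        ((DH (DF x) : Module.End ℂ GA)) - ((DF (DH x) : Module.End ℂ GA))
          + (2 : ℂ) • ((DF x : Module.End ℂ GA))
          = sbr (s : Module.End ℂ GA) (x : Module.End ℂ GA)) ∧
      (∃ s : ↥(s2Span (a : ℂ)), ∀ x : ↥(s2Span (a : ℂ)),
        ((DE (DF x) : Module.End ℂ GA)) - ((DF (DE x) : Module.End ℂ GA))
          - ((DH x : Module.End ℂ GA))
          = sbr (s : Module.End ℂ GA) (x : Module.End ℂ GA)) ∧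
      -- the classes of `𝖤, 𝖧, 𝖥` span `Der_ext S'(2,α)` …
      (∀ D : ↥(s2Span (a : ℂ)) →ₗ[ℂ] ↥(s2Span (a : ℂ)), IsSuperDer (a : ℂ) D →
        ∃ (cE cH cF : ℂ) (s : ↥(s2Span (a : ℂ))), ∀ x : ↥(s2Span (a : ℂ)),
          ((D x : Module.End ℂ GA)) = cE • ((DE x : Module.End ℂ GA))
            + cH • ((DH x : Module.End ℂ GA)) + cF • ((DF x : Module.End ℂ GA))
            + sbr (s : Module.End ℂ GA) (x : Module.End ℂ GA)) ∧
      -- … which is purely even: every odd derivation is inner …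
      (∀ D : ↥(s2Span (a : ℂ)) →ₗ[ℂ] ↥(s2Span (a : ℂ)), IsOddDer (a : ℂ) D →
        IsInnerDer (a : ℂ) D) ∧
      -- … and the classes of `𝖤, 𝖧, 𝖥` are linearly independent, so that
      -- `Der_ext S'(2,α) ≅ 𝔰𝔩(2,ℂ)`
      (∀ (cE cH cF : ℂ) (s : ↥(s2Span (a : ℂ))),
        (∀ x : ↥(s2Span (a : ℂ)),
          cE • ((DE x : Module.End ℂ GA)) + cH • ((DH x : Module.End ℂ GA))
            + cF • ((DF x : Module.End ℂ GA))
            = sbr (s : Module.End ℂ GA) (x : Module.End ℂ GA)) →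
        cE = 0 ∧ cH = 0 ∧ cF = 0) := by
  refine ⟨outerDer a 1 0 0, outerDer a 0 1 0, outerDer a 0 0 1, isEvenDer_outerDer ..,
    isEvenDer_outerDer .., isEvenDer_outerDer .., fun k z hz => ?_, fun k z hz => ?_,
    fun k z hz => ?_, fun k z hz => ?_, fun k z hz => ?_, fun k z hz => ?_, fun k z hz => ?_,
    fun k z hz => ?_, ?_, ?_, ?_, fun D hD => ?_, fun D hD => isInnerDer_of_isOddDer hD,
    fun cE cH cF s h => coeff_eq_zero_of_outerDer_eq_bracket (s := s) ?_⟩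
  · simp [coe_outerDer_of_eq_hop hz]
  · simp [coe_outerDer_of_eq_yop hz]
  · simp [coe_outerDer_of_eq_xop hz]
  · simp [coe_outerDer_of_eq_pop hz]
  · simp [coe_outerDer_of_eq_xop hz]
  · simp [coe_outerDer_of_eq_hop hz]
  · simp [coe_outerDer_of_eq_pop hz]
  · simp [coe_outerDer_of_eq_yop hz]
  · exact ⟨0, fun x => (coe_outerDer_H_lie_E x).trans (sbr_zero_left _).symm⟩
  · exact ⟨0, fun x => (coe_outerDer_H_lie_F x).trans (sbr_zero_left _).symm⟩
  · exact ⟨0, fun x => (coe_outerDer_E_lie_F x).trans (sbr_zero_left _).symm⟩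
  · obtain ⟨cE, cH, cF, s, rfl⟩ := exists_eq_outerDer_add_bracket_of_isSuperDer hD
    exact ⟨cE, cH, cF, s, fun x => by rw [← coe_bracket, ← coe_outerDer]; rfl⟩
  · exact LinearMap.ext fun x => Subtype.ext <| by rw [coe_bracket, coe_outerDer, h]
end
end
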